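/- Let r ≥ 1 and let (α_1, β_1), ..., (α_r, β_r) be pairs of real numbers with 0 ≤ α_j, β_j ≤ 1 and α_j + β_j = 1 for each j. Let θ_1 be a real number with inf_{q ∈ ℤ_{>0}} q‖qθ_1‖ > 0. Then the set ⋂_{j=1}^r { θ_2 ∈ [0,1] : there exists δ > 0 such that for every positive integer p, max( p^{α_j} ‖pθ_1‖, p^{β_j} ‖pθ_2‖ ) ≥ δ } has Hausdorff dimension equal to 1. -/

import Mathlib

open Filter

/-- Distance from a real number to the nearest integer. -/
noncomputable def nint (x : ℝ) : ℝ := |x - round x|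

/-!
A violation of the condition defining `BAD(α, β)` at `(x, y)` is a rational point `(p / q, r / q)`
close to `(x, y)`. By the pigeonhole principle it lies on a line `A X - B Y + C = 0` with
`|A| ≤ q ^ α` and `|B| ≤ q ^ β`, which is not vertical because `x` is badly approximable. Fix a
large base `R` and sort these pairs by the orders of magnitude `R ^ n` of `R ^ 4 q B` and `R ^ t`
of `q ^ β / B`; the ordinates `y` spoiled by a pair are within `R ^ (-n - 1)` both of `r / q` and
of the ordinate of the line over `x`.

In an interval of length `R ^ (-n)` every line of a class passes through every point of that class,
so that all the pairs share their line or their point. In an interval of length `R ^ (k - n)`,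
where `k` is a small multiple of `t`, two distinct lines would meet over a rational point which is
close to `(x, y)` as well, but belongs to an earlier stage. If the spoiled ordinates of the earlier
stages have been discarded, then all pairs share their line. So in each surviving interval of
length `R ^ (k - n)` stage `n` costs boundedly many intervals of length `R ^ (-n - 1)`, and since
the number of survivors grows by at least `R ^ s` at each step, the classes with large `k` are
negligible. There is even room to discard any null set of the `s`-dimensional Hausdorff measure,
which is therefore not zero on the ordinates that remain.
-/

section Covering

/-- `S` is covered by at most `N` closed balls of radius `δ`; unlike for
`Metric.externalCoveringNumber`, the radius is a real number. -/
def CoverableBy {X : Type*} [PseudoMetricSpace X] (N : ℕ) (δ : ℝ) (S : Set X) : Prop :=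
  ∃ F : Finset X, F.card ≤ N ∧ S ⊆ ⋃ x ∈ F, Metric.closedBall x δ

namespace CoverableBy

variable {X : Type*} [PseudoMetricSpace X] {N N' : ℕ} {δ : ℝ} {S S' : Set X}

lemma mono (h : CoverableBy N δ S) (hN : N ≤ N') (hS : S' ⊆ S) : CoverableBy N' δ S' :=
  let ⟨F, hF, hSF⟩ := h
  ⟨F, hF.trans hN, hS.trans hSF⟩

lemma empty (N : ℕ) (δ : ℝ) : CoverableBy N δ (∅ : Set X) := ⟨∅, by simp, by simp⟩

lemma of_subset_closedBall {x : X} (h : S ⊆ Metric.closedBall x δ) : CoverableBy 1 δ S :=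
  ⟨{x}, by simp, by simpa using h⟩

lemma union (h : CoverableBy N δ S) (h' : CoverableBy N' δ S') :
    CoverableBy (N + N') δ (S ∪ S') := by
  classical
  obtain ⟨F, hF, hSF⟩ := h
  obtain ⟨F', hF', hSF'⟩ := h'
  refine ⟨F ∪ F', (Finset.card_union_le _ _).trans (add_le_add hF hF'), ?_⟩
  rw [Finset.set_biUnion_union]
  exact Set.union_subset_union hSF hSF'

lemma biUnion {κ : Type*} (T : Finset κ) {S : κ → Set X} (h : ∀ i ∈ T, CoverableBy N δ (S i)) :
    CoverableBy (T.card * N) δ (⋃ i ∈ T, S i) := by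
  classical
  choose! F hF hSF using h
  refine ⟨T.biUnion F, Finset.card_biUnion_le_card_mul T F N hF, ?_⟩
  rw [Finset.set_biUnion_biUnion]
  exact Set.iUnion₂_mono hSF

lemma iUnion {κ : Type*} [Fintype κ] {S : κ → Set X} (h : ∀ i, CoverableBy N δ (S i)) :
    CoverableBy (Fintype.card κ * N) δ (⋃ i, S i) := by
  simpa using biUnion Finset.univ fun i _ => h i

end CoverableBy

open MeasureTheory NNReal ENNReal

variable {X : Type*} {s : ℝ}

/- Null sets are covered economically; the summands `W i` are made positive so that each member of
the cover can later be assigned a scale. -/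
lemma exists_cover_of_hausdorffMeasure_eq_zero [EMetricSpace X] [MeasurableSpace X]
    [BorelSpace X] (hs : 0 < s) {S : Set X} (h : μH[s] S = 0) {ε : ℝ≥0} (hε : 0 < ε) :
    ∃ (t : ℕ → Set X) (W : ℕ → ℝ≥0), S ⊆ ⋃ i, t i ∧ (∀ i, 0 < W i) ∧
      (∀ i, Metric.ediam (t i) ^ s ≤ W i) ∧ ∑' i, (W i : ℝ≥0∞) ≤ ε := by
  have hε₂ : (0 : ℝ≥0∞) < ε / 2 := ENNReal.half_pos (by positivity)
  rw [Measure.hausdorffMeasure_apply] at h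
  have hlt : _ < (ε / 2 : ℝ≥0∞) := ((iSup₂_eq_bot.1 h) ⊤ (by simp)).trans_lt hε₂
  simp only [iInf_lt_iff] at hlt
  obtain ⟨t, hS, -, ht⟩ := hlt
  obtain ⟨γ, hγ, hγsum⟩ := ENNReal.exists_pos_sum_of_countable hε₂.ne' ℕ
  have hd : ∀ i, Metric.ediam (t i) ^ s ≤ ⨆ _ : (t i).Nonempty, Metric.ediam (t i) ^ s := by
    intro i
    rcases (t i).eq_empty_or_nonempty with hi | hi
    · simp [hi, hs]
    · exact le_iSup (fun _ : (t i).Nonempty => Metric.ediam (t i) ^ s) hi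
  have hsum : ∑' i, Metric.ediam (t i) ^ s < ε / 2 := (ENNReal.tsum_le_tsum hd).trans_lt ht
  have hfin : ∀ i, Metric.ediam (t i) ^ s ≠ ∞ :=
    fun i => ((ENNReal.le_tsum i).trans_lt (hsum.trans_le le_top)).ne
  refine ⟨t, fun i => (Metric.ediam (t i) ^ s).toNNReal + γ i, hS,
    fun i => add_pos_of_nonneg_of_pos zero_le (hγ i), fun i => ?_, ?_⟩
  · rw [ENNReal.coe_add, ENNReal.coe_toNNReal (hfin i)]
    exact le_self_add
  · simp only [ENNReal.coe_add, ENNReal.coe_toNNReal (hfin _), ENNReal.tsum_add]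
    exact (add_le_add hsum.le hγsum.le).trans_eq (ENNReal.add_halves _)

lemma exists_level {ρ x : ℝ≥0} (hρ : 1 < ρ) (hx : 0 < x) (hxρ : x ≤ ρ⁻¹ ^ 2) :
    ∃ n : ℕ, ρ⁻¹ ^ (n + 2) < x ∧ x ≤ ρ⁻¹ ^ (n + 1) := by
  have hρ0 : 0 < ρ := one_pos.trans hρ
  have hle : x * ρ ≤ 1 :=
    calc x * ρ ≤ ρ⁻¹ ^ 2 * ρ := by gcongr
      _ = ρ⁻¹ := by field_simp
      _ ≤ 1 := (inv_lt_one_of_one_lt₀ hρ).le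
  obtain ⟨n, hlt, hle⟩ := exists_nat_pow_near_of_lt_one (mul_pos hx hρ0) hle
    (inv_pos.2 hρ0) (inv_lt_one_of_one_lt₀ hρ)
  rw [← div_inv_eq_mul] at hlt hle
  exact ⟨n, by rwa [pow_succ, ← lt_div_iff₀ (inv_pos.2 hρ0)],
    by rwa [pow_succ, ← div_le_iff₀ (inv_pos.2 hρ0)]⟩

lemma coverableBy_one_of_ediam_rpow_le [PseudoMetricSpace X] (hs : 0 < s) {S : Set X}
    {δ : ℝ≥0} (h : Metric.ediam S ^ s ≤ (δ ^ s : ℝ≥0)) : CoverableBy 1 (δ : ℝ) S := by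
  rcases S.eq_empty_or_nonempty with rfl | ⟨x, hx⟩
  · exact .empty 1 δ
  · rw [ENNReal.coe_rpow_of_nonneg _ hs.le, ENNReal.rpow_le_rpow_iff hs] at h
    refine .of_subset_closedBall (x := x) fun y hy => ?_
    rw [Metric.mem_closedBall, dist_nndist, NNReal.coe_le_coe, ← ENNReal.coe_le_coe,
      ← edist_nndist]
    exact (Metric.edist_le_ediam_of_mem hy hx).trans h

/- The scale of a member of the cover is read off from its summand: at most `ρ ^ n` summands
exceed `ρ⁻¹ ^ (n + 2)` because all of them add up to at most `ρ⁻¹ ^ 2`. -/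
lemma exists_levels_of_hausdorffMeasure_eq_zero [MetricSpace X] [MeasurableSpace X] [BorelSpace X]
    (hs : 0 < s) {S : Set X} (h : μH[s] S = 0) {b : ℝ≥0} (hb : 1 < b) :
    ∃ U : ℕ → Set X, S ⊆ ⋃ n, U n ∧
      ∀ n, CoverableBy ⌊((b : ℝ) ^ s) ^ n⌋₊ (1 / (b : ℝ) ^ (n + 1)) (U n) := by
  set ρ : ℝ≥0 := b ^ s with hρ
  have hρ1 : 1 < ρ := NNReal.one_lt_rpow hb hs
  have : 0 < ρ := one_pos.trans hρ1
  obtain ⟨t, W, hS, hW, ht, hsum⟩ := exists_cover_of_hausdorffMeasure_eq_zero hs h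
    (ε := ρ⁻¹ ^ 2) (by positivity)
  choose level hlt_level hle_level using fun i =>
    exists_level hρ1 (hW i) (by exact_mod_cast (ENNReal.le_tsum i).trans hsum)
  refine ⟨fun n => ⋃ i ∈ {i | level i = n}, t i, fun x hx => ?_, fun n => ?_⟩
  · obtain ⟨i, hi⟩ := Set.mem_iUnion.1 (hS hx)
    exact Set.mem_iUnion.2 ⟨level i, Set.mem_biUnion rfl hi⟩
  obtain ⟨hfin, hcard⟩ := ENNReal.finset_card_const_le_le_of_tsum_le ENNReal.coe_ne_top hsum
    (ε := ((ρ⁻¹ ^ (n + 2) : ℝ≥0) : ℝ≥0∞)) (by positivity)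
  have hcard_le : hfin.toFinset.card ≤ ⌊((b : ℝ) ^ s) ^ n⌋₊ := by
    refine Nat.le_floor ?_
    have hquot : ρ⁻¹ ^ 2 / ρ⁻¹ ^ (n + 2) = ρ ^ n := by
      rw [add_comm, pow_add, div_mul_cancel_left₀ (by positivity), inv_pow, inv_inv]
    rw [← ENNReal.coe_div (by positivity), hquot] at hcard
    exact_mod_cast hcard
  refine (CoverableBy.biUnion hfin.toFinset (N := 1) (S := fun i => {x ∈ t i | level i = n})
    fun i _ => ?_).mono (by simpa only [mul_one] using hcard_le) ?_
  · by_cases hi : level i = n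
    · have hscale : ρ⁻¹ ^ (n + 1) = (1 / b ^ (n + 1)) ^ s := by
        rw [hρ, one_div, NNReal.inv_rpow, inv_pow, ← NNReal.rpow_natCast, ← NNReal.rpow_natCast,
          ← NNReal.rpow_mul, ← NNReal.rpow_mul, mul_comm]
      have hball := coverableBy_one_of_ediam_rpow_le hs ((ht i).trans
        (ENNReal.coe_le_coe.2 ((hle_level i).trans_eq (hi ▸ hscale))))
      simpa [hi] using hball
    · simpa [hi] using CoverableBy.empty 1 _
  · refine Set.iUnion₂_subset fun i hi x hx => Set.mem_biUnion ?_ ⟨hx, hi⟩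
    rw [Set.mem_ofPred_eq] at hi
    subst hi
    simpa only [Set.Finite.coe_toFinset, Set.mem_ofPred_eq, ENNReal.coe_le_coe] using
      (hlt_level i).le

end Covering

section AdicCells

/-- The `a`-th cell of level `n` in the `R`-adic subdivision of the line. Cells are closed, so
neighbouring ones share an endpoint. -/
def adicCell (R n a : ℕ) : Set ℝ := Set.Icc ((a : ℝ) / R ^ n) ((a + 1) / R ^ n)

lemma adicCell_add_subset {R : ℕ} [NeZero R] (n k b : ℕ) :
    adicCell R (n + k) b ⊆ adicCell R n (b / R ^ k) := by
  have hR : (0 : ℝ) < R := Nat.cast_pos.2 (NeZero.pos R)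
  have hlower : (R : ℝ) ^ k * (b / R ^ k : ℕ) ≤ b := mod_cast Nat.mul_div_le b _
  have hupper : (b : ℝ) + 1 ≤ (R : ℝ) ^ k * ((b / R ^ k : ℕ) + 1) :=
    mod_cast Nat.lt_mul_div_succ b (pow_pos (NeZero.pos R) k)
  apply Set.Icc_subset_Icc <;> rw [pow_add, mul_comm (_ ^ n), ← div_div] <;> gcongr ?_ / _
  · rwa [le_div_iff₀' (by positivity)]
  · rwa [div_le_iff₀' (by positivity)]

lemma abs_sub_le_of_mem_adicCell {R n a : ℕ} {y z : ℝ} (hy : y ∈ adicCell R n a)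
    (hz : z ∈ adicCell R n a) : |y - z| ≤ 1 / (R : ℝ) ^ n := by
  have hlength : ((a : ℝ) + 1) / R ^ n - a / R ^ n = 1 / R ^ n := by ring
  exact hlength ▸ Real.dist_le_of_mem_Icc hy hz

lemma card_le_four_of_le_of_le_add_three {x : ℝ} {T : Finset ℕ}
    (h : ∀ b ∈ T, x ≤ b ∧ (b : ℝ) ≤ x + 3) : T.card ≤ 4 := by
  have hT : T ⊆ Finset.Icc ⌈x⌉₊ (⌈x⌉₊ + 3) := fun b hb => by
    refine Finset.mem_Icc.2 ⟨Nat.ceil_le.2 (h b hb).1, ?_⟩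
    exact_mod_cast (h b hb).2.trans (add_le_add_left (Nat.le_ceil x) 3)
  simpa [Nat.card_Icc, add_assoc] using Finset.card_le_card hT

lemma card_le_four_of_inter_closedBall_nonempty {R : ℕ} [NeZero R] {m : ℕ} {x : ℝ} {T : Finset ℕ}
    (h : ∀ b ∈ T, (adicCell R m b ∩ Metric.closedBall x (1 / (R : ℝ) ^ m)).Nonempty) :
    T.card ≤ 4 := by
  have hR : (0 : ℝ) < (R : ℝ) ^ m := pow_pos (Nat.cast_pos.2 (NeZero.pos R)) m
  refine card_le_four_of_le_of_le_add_three (x := x * (R : ℝ) ^ m - 2) fun b hb => ?_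
  obtain ⟨y, ⟨hby, hyb⟩, hyx⟩ := h b hb
  rw [div_le_iff₀ hR] at hby
  rw [le_div_iff₀ hR] at hyb
  rw [Metric.mem_closedBall, Real.dist_eq, le_div_iff₀ hR, ← abs_of_pos hR, ← abs_mul, abs_le,
    sub_mul] at hyx
  constructor <;> linarith

lemma card_le_of_coverableBy {R : ℕ} [NeZero R] {m N : ℕ} {S : Set ℝ} {T : Finset ℕ}
    (hS : CoverableBy N (1 / (R : ℝ) ^ m) S) (h : ∀ b ∈ T, (adicCell R m b ∩ S).Nonempty) :
    T.card ≤ 4 * N := by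
  classical
  obtain ⟨F, hF, hSF⟩ := hS
  let near (x : ℝ) : Finset ℕ :=
    {b ∈ T | (adicCell R m b ∩ Metric.closedBall x (1 / (R : ℝ) ^ m)).Nonempty}
  have hT : T ⊆ F.biUnion near := fun b hb => by
    obtain ⟨y, hyb, hyS⟩ := h b hb
    obtain ⟨x, hx, hyx⟩ := Set.mem_iUnion₂.1 (hSF hyS)
    exact Finset.mem_biUnion.2 ⟨x, hx, Finset.mem_filter.2 ⟨hb, y, hyb, hyx⟩⟩
  have hnear : ∀ x ∈ F, (near x).card ≤ 4 := fun x _ =>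
    card_le_four_of_inter_closedBall_nonempty fun b hb => (Finset.mem_filter.1 hb).2
  calc T.card ≤ F.card * 4 :=
        (Finset.card_le_card hT).trans (Finset.card_biUnion_le_card_mul F near 4 hnear)
    _ ≤ 4 * N := by omega

/-- The indices of the cells obtained by cutting each cell with index in `S` into `R` cells of the
next level. -/
def adicChildren (R : ℕ) [NeZero R] (S : Finset ℕ) : Finset ℕ :=
  (S ×ˢ Finset.univ).map (Nat.divModEquiv R).symm.toEmbedding

lemma mem_adicChildren {R : ℕ} [NeZero R] {S : Finset ℕ} {b : ℕ} :
    b ∈ adicChildren R S ↔ b / R ∈ S := by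
  simp [adicChildren, Finset.mem_map_equiv, Nat.divModEquiv]

lemma card_adicChildren (R : ℕ) [NeZero R] (S : Finset ℕ) :
    (adicChildren R S).card = R * S.card := by
  simp [adicChildren, mul_comm]

open Classical in
/-- The cells of level `n` that remain when one starts from `[0, 1]`, subdivides repeatedly, and
discards at level `i + 1` all cells meeting `Y i`. -/
noncomputable def survivors (R : ℕ) [NeZero R] (Y : ℕ → Set ℝ) : ℕ → Finset ℕ
  | 0 => {0}
  | n + 1 => {b ∈ adicChildren R (survivors R Y n) | Disjoint (adicCell R (n + 1) b) (Y n)}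

section Survivors

variable {R : ℕ} [NeZero R] {Y : ℕ → Set ℝ}

lemma mem_survivors_succ {n b : ℕ} : b ∈ survivors R Y (n + 1) ↔
    b / R ∈ survivors R Y n ∧ Disjoint (adicCell R (n + 1) b) (Y n) := by
  simp [survivors, mem_adicChildren]

lemma div_pow_mem_survivors {n k b : ℕ} (h : b ∈ survivors R Y (n + k)) :
    b / R ^ k ∈ survivors R Y n := by
  induction k generalizing b with
  | zero => simpa using h
  | succ k ih =>
    have := ih (mem_survivors_succ.1 h).1
    rwa [Nat.div_div_eq_div_mul, ← pow_succ'] at this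

lemma disjoint_adicCell_of_mem_survivors {m n a : ℕ} (h : a ∈ survivors R Y n) (hm : m < n) :
    Disjoint (adicCell R n a) (Y m) := by
  obtain ⟨k, rfl⟩ := Nat.exists_eq_add_of_lt hm
  rw [add_right_comm] at h ⊢
  exact (mem_survivors_succ.1 (div_pow_mem_survivors h)).2.mono_left (adicCell_add_subset _ _ _)

lemma exists_mem_Icc_forall_notMem (h : ∀ n, (survivors R Y n).Nonempty) :
    ∃ y ∈ Set.Icc (0 : ℝ) 1, ∀ n, y ∉ Y n := by
  let K (n : ℕ) : Set ℝ := ⋃ a ∈ survivors R Y n, adicCell R n a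
  have hcompact (n : ℕ) : IsCompact (K n) :=
    (survivors R Y n).isCompact_biUnion fun a _ => isCompact_Icc
  have hanti (n : ℕ) : K (n + 1) ⊆ K n :=
    Set.iUnion₂_subset fun b hb => (adicCell_add_subset n 1 b).trans
      (Set.subset_biUnion_of_mem (u := adicCell R n) (div_pow_mem_survivors hb))
  have hnonempty (n : ℕ) : (K n).Nonempty := by
    obtain ⟨a, ha⟩ := h n
    exact ⟨a / R ^ n, Set.mem_biUnion ha (Set.left_mem_Icc.2 (by gcongr; simp))⟩
  obtain ⟨y, hy⟩ := IsCompact.nonempty_iInter_of_sequence_nonempty_isCompact_isClosed K hanti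
    hnonempty (hcompact 0) fun n => (hcompact n).isClosed
  rw [Set.mem_iInter] at hy
  refine ⟨y, by simpa [K, survivors, adicCell] using hy 0, fun n hyn => ?_⟩
  obtain ⟨b, hb, hyb⟩ := Set.mem_iUnion₂.1 (hy (n + 1))
  exact Set.disjoint_left.1 (mem_survivors_succ.1 hb).2 hyb hyn

end Survivors

end AdicCells

section LocallyCoverable

/-- What is discarded at stage `n` when `X m n` is the part of it that is controlled at
level `m`. -/
def stageUnion (X : ℕ → ℕ → Set ℝ) (n : ℕ) : Set ℝ := ⋃ m ∈ Finset.range (n + 1), X m n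

/-- Inside a cell of level `m ≤ n` from which nothing has been discarded before stage `m`, the set
`X m n` is covered by `w m n` balls of the size of the cells of level `n + 1`. -/
def IsLocallyCoverable (R : ℕ) (X : ℕ → ℕ → Set ℝ) (w : ℕ → ℕ → ℕ) : Prop :=
  ∀ m n a, m ≤ n → (∀ i < m, Disjoint (adicCell R m a) (stageUnion X i)) →
    CoverableBy (w m n) (1 / (R : ℝ) ^ (n + 1)) (X m n ∩ adicCell R m a)

variable {R : ℕ} {X : ℕ → ℕ → Set ℝ} {w : ℕ → ℕ → ℕ}

lemma IsLocallyCoverable.union_level_zero (hX : IsLocallyCoverable R X w) {U : ℕ → Set ℝ}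
    {N : ℕ → ℕ} (hU : ∀ n, CoverableBy (N n) (1 / (R : ℝ) ^ (n + 1)) (U n)) :
    IsLocallyCoverable R (fun m n => X m n ∪ {y | m = 0 ∧ y ∈ U n})
      (fun m n => w m n + if m = 0 then N n else 0) := by
  intro m n a hmn hdisj
  have hXdisj : ∀ i < m, Disjoint (adicCell R m a) (stageUnion X i) := fun i hi =>
    (hdisj i hi).mono_right (Set.iUnion₂_mono fun _ _ => Set.subset_union_left)
  rw [Set.union_inter_distrib_right]
  refine (hX m n a hmn hXdisj).union ?_
  split_ifs with hm
  · exact (hU n).mono le_rfl fun y hy => hy.1.2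
  · simpa [hm] using CoverableBy.empty 0 _

variable [NeZero R]

lemma card_le_mul_card_survivors (hX : IsLocallyCoverable R X w) {m n : ℕ} (hmn : m ≤ n)
    {T : Finset ℕ} (hT : T ⊆ adicChildren R (survivors R (stageUnion X) n))
    (hmeet : ∀ b ∈ T, (adicCell R (n + 1) b ∩ X m n).Nonempty) :
    T.card ≤ 4 * w m n * (survivors R (stageUnion X) m).card := by
  obtain ⟨k, rfl⟩ := Nat.exists_eq_add_of_le hmn
  have hparent : ∀ b ∈ T, b / R ^ (k + 1) ∈ survivors R (stageUnion X) m := fun b hb => by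
    rw [pow_succ', ← Nat.div_div_eq_div_mul]
    exact div_pow_mem_survivors (mem_adicChildren.1 (hT hb))
  refine Finset.card_le_mul_card_image_of_maps_to hparent _ fun a ha => ?_
  refine card_le_of_coverableBy (hX m (m + k) a hmn fun i hi =>
    disjoint_adicCell_of_mem_survivors ha hi) fun b hb => ?_
  obtain ⟨hbT, rfl⟩ := Finset.mem_filter.1 hb
  obtain ⟨y, hyb, hyX⟩ := hmeet b hbT
  exact ⟨y, hyb, hyX, adicCell_add_subset m (k + 1) b hyb⟩

lemma mul_card_survivors_le (hX : IsLocallyCoverable R X w) (n : ℕ) :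
    R * (survivors R (stageUnion X) n).card ≤ (survivors R (stageUnion X) (n + 1)).card +
      ∑ m ∈ Finset.range (n + 1), 4 * w m n * (survivors R (stageUnion X) m).card := by
  classical
  set V := survivors R (stageUnion X)
  let bad (m : ℕ) : Finset ℕ :=
    {b ∈ adicChildren R (V n) | (adicCell R (n + 1) b ∩ X m n).Nonempty}
  have hsplit : adicChildren R (V n) ⊆ V (n + 1) ∪ (Finset.range (n + 1)).biUnion bad := by
    intro b hb
    by_cases hdisj : Disjoint (adicCell R (n + 1) b) (stageUnion X n)
    · exact Finset.mem_union_left _ (mem_survivors_succ.2 ⟨mem_adicChildren.1 hb, hdisj⟩)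
    · obtain ⟨y, hyb, hy⟩ := Set.not_disjoint_iff.1 hdisj
      obtain ⟨m, hm, hyX⟩ := Set.mem_iUnion₂.1 hy
      exact Finset.mem_union_right _
        (Finset.mem_biUnion.2 ⟨m, hm, Finset.mem_filter.2 ⟨hb, y, hyb, hyX⟩⟩)
  have hbad : ∀ m ∈ Finset.range (n + 1), (bad m).card ≤ 4 * w m n * (V m).card := fun m hm =>
    card_le_mul_card_survivors hX (Nat.lt_succ_iff.1 (Finset.mem_range.1 hm))
      (Finset.filter_subset _ _) fun b hb => (Finset.mem_filter.1 hb).2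
  calc R * (V n).card = (adicChildren R (V n)).card := (card_adicChildren R _).symm
    _ ≤ (V (n + 1)).card + ((Finset.range (n + 1)).biUnion bad).card :=
      (Finset.card_le_card hsplit).trans (Finset.card_union_le _ _)
    _ ≤ _ := by
      gcongr
      exact Finset.card_biUnion_le.trans (Finset.sum_le_sum hbad)

lemma mul_pow_le_mul_pow_of_mul_le_succ {v : ℕ → ℝ} {ρ : ℝ} (hρ : 0 < ρ) {m n : ℕ} (hmn : m ≤ n)
    (h : ∀ i < n, ρ * v i ≤ v (i + 1)) : v m * ρ ^ n ≤ v n * ρ ^ m := by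
  induction n, hmn using Nat.le_induction with
  | base => exact le_rfl
  | succ n _ ih =>
    calc v m * ρ ^ (n + 1) = ρ * (v m * ρ ^ n) := by ring
      _ ≤ ρ * (v n * ρ ^ m) := mul_le_mul_of_nonneg_left (ih fun i hi => h i (by omega)) hρ.le
      _ = ρ * v n * ρ ^ m := by ring
      _ ≤ v (n + 1) * ρ ^ m := by gcongr; exact h n (by omega)

lemma mul_le_succ_of_recurrence {v : ℕ → ℝ} {c : ℕ → ℕ → ℝ} {d ρ : ℝ} (hρ : 0 < ρ)
    (hv : ∀ n, 0 ≤ v n) (hc : ∀ m n, 0 ≤ c m n)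
    (hrec : ∀ n, d * v n ≤ v (n + 1) + ∑ m ∈ Finset.range (n + 1), c m n * v m)
    (hgrowth : ∀ n, ∑ m ∈ Finset.range (n + 1), c m n * ρ ^ m ≤ (d - ρ) * ρ ^ n) (n : ℕ) :
    ρ * v n ≤ v (n + 1) := by
  induction n using Nat.strong_induction_on with
  | _ n ih =>
  have hratio : ∀ m ∈ Finset.range (n + 1), v m * ρ ^ n ≤ v n * ρ ^ m := fun m hm =>
    mul_pow_le_mul_pow_of_mul_le_succ hρ (Nat.lt_succ_iff.1 (Finset.mem_range.1 hm)) ih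
  have hloss : (∑ m ∈ Finset.range (n + 1), c m n * v m) * ρ ^ n ≤ (d - ρ) * ρ ^ n * v n :=
    calc (∑ m ∈ Finset.range (n + 1), c m n * v m) * ρ ^ n
        = ∑ m ∈ Finset.range (n + 1), c m n * (v m * ρ ^ n) := by
          simp only [Finset.sum_mul, mul_assoc]
      _ ≤ ∑ m ∈ Finset.range (n + 1), c m n * (v n * ρ ^ m) :=
          Finset.sum_le_sum fun m hm => mul_le_mul_of_nonneg_left (hratio m hm) (hc m n)
      _ = (∑ m ∈ Finset.range (n + 1), c m n * ρ ^ m) * v n := by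
          simp only [Finset.sum_mul, mul_assoc, mul_comm (v n)]
      _ ≤ (d - ρ) * ρ ^ n * v n := mul_le_mul_of_nonneg_right (hgrowth n) (hv n)
  have hpow : 0 < ρ ^ n := pow_pos hρ n
  nlinarith [mul_le_mul_of_nonneg_right (hrec n) hpow.le]

lemma survivors_nonempty (hX : IsLocallyCoverable R X w) {ρ : ℝ} (hρ : 0 < ρ)
    (hgrowth : ∀ n, ∑ m ∈ Finset.range (n + 1), 4 * (w m n : ℝ) * ρ ^ m ≤ (R - ρ) * ρ ^ n)
    (n : ℕ) : (survivors R (stageUnion X) n).Nonempty := by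
  have hstep := mul_le_succ_of_recurrence
    (v := fun n => ((survivors R (stageUnion X) n).card : ℝ)) hρ (fun n => by positivity)
    (fun m n => by positivity) (fun n => mod_cast mul_card_survivors_le hX n) hgrowth
  induction n with
  | zero => exact Finset.singleton_nonempty 0
  | succ n ih =>
    rw [← Finset.card_pos, ← Nat.cast_pos (α := ℝ)] at ih ⊢
    exact (mul_pos hρ ih).trans_le (hstep n)

lemma exists_mem_Icc_forall_notMem_of_isLocallyCoverable (hX : IsLocallyCoverable R X w) {ρ : ℝ}
    (hρ : 0 < ρ)
    (hgrowth : ∀ n, ∑ m ∈ Finset.range (n + 1), 4 * (w m n : ℝ) * ρ ^ m ≤ (R - ρ) * ρ ^ n) :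
    ∃ y ∈ Set.Icc (0 : ℝ) 1, ∀ n, y ∉ stageUnion X n :=
  exists_mem_Icc_forall_notMem (survivors_nonempty hX hρ hgrowth)

open MeasureTheory in
/- A null set could be discarded along with `X`: cut into pieces `U n` of the size of the cells of
level `n + 1`, it only adds `(R ^ s) ^ n` balls to stage `n`, controlled at level `0`. -/
theorem hausdorffMeasure_diff_iUnion_stageUnion_ne_zero (hX : IsLocallyCoverable R X w) {s : ℝ}
    (hs : 0 < s) (hR : 1 < R)
    (hgrowth : ∀ n, ∑ m ∈ Finset.range (n + 1), 4 * (w m n : ℝ) * ((R : ℝ) ^ s) ^ m +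
      4 * ((R : ℝ) ^ s) ^ n ≤ (R - (R : ℝ) ^ s) * ((R : ℝ) ^ s) ^ n) :
    μH[s] (Set.Icc (0 : ℝ) 1 \ ⋃ n, stageUnion X n) ≠ 0 := by
  intro hnull
  obtain ⟨U, hSU, hU⟩ := exists_levels_of_hausdorffMeasure_eq_zero hs hnull (b := (R : NNReal))
    (mod_cast hR)
  obtain ⟨y, hy, hyX⟩ := exists_mem_Icc_forall_notMem_of_isLocallyCoverable
    (hX.union_level_zero hU) (ρ := (R : ℝ) ^ s) (by positivity) fun n => (hgrowth n).trans' <| by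
      have hfloor : (⌊((R : ℝ) ^ s) ^ n⌋₊ : ℝ) ≤ ((R : ℝ) ^ s) ^ n := Nat.floor_le (by positivity)
      simpa [mul_add, add_mul, Finset.sum_add_distrib] using hfloor
  have hyX' : y ∉ ⋃ n, stageUnion X n := fun h => by
    obtain ⟨n, hn⟩ := Set.mem_iUnion.1 h
    exact hyX n (Set.iUnion₂_mono (fun _ _ => Set.subset_union_left) hn)
  obtain ⟨n, hn⟩ := Set.mem_iUnion.1 (hSU ⟨hy, hyX'⟩)
  exact hyX n (Set.mem_biUnion (x := 0) (by simp) (Or.inr ⟨rfl, hn⟩))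

end LocallyCoverable

section DangerousPairs

lemma rpow_le_mul_rpow {x y K s : ℝ} (hx : 0 ≤ x) (hy : 0 ≤ y) (hK : 1 ≤ K) (hs0 : 0 ≤ s)
    (hs1 : s ≤ 1) (h : x ≤ K * y) : x ^ s ≤ K * y ^ s :=
  calc x ^ s ≤ (K * y) ^ s := Real.rpow_le_rpow hx h hs0
    _ = K ^ s * y ^ s := Real.mul_rpow (by linarith) hy
    _ ≤ K ^ (1 : ℝ) * y ^ s := by gcongr
    _ = K * y ^ s := by rw [Real.rpow_one]

lemma mul_rpow_le_mul_rpow {a T x y K s : ℝ} (hx : 0 ≤ x) (hT : 0 ≤ T) (hy : 0 ≤ y) (hK : 1 ≤ K)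
    (hs0 : 0 ≤ s) (hs1 : s ≤ 1) (haT : a ≤ T ^ s) (h : x * T ≤ K * y) :
    a * x ^ s ≤ K * y ^ s :=
  calc a * x ^ s ≤ T ^ s * x ^ s := by gcongr
    _ = (x * T) ^ s := by rw [Real.mul_rpow hx hT, mul_comm]
    _ ≤ K * y ^ s := rpow_le_mul_rpow (mul_nonneg hx hT) hy hK hs0 hs1 h

lemma lt_one_div_pow_of_mul_le {R z : ℝ} {k : ℕ} (hR : 1 < R)
    (hz : R ^ (k + 11) * z ≤ R ^ 3 * R ^ k) : z < 1 / R ^ 7 := by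
  refine lt_of_mul_lt_mul_left (hz.trans_lt ?_) (by positivity : 0 ≤ R ^ (k + 11))
  rw [mul_one_div, lt_div_iff₀ (by positivity), ← pow_add, ← pow_add]
  exact pow_lt_pow_right₀ hR (by omega)

/-- The rational point `(p / q, r / q)` of the plane; the fractions need not be reduced. -/
structure RatPoint where
  (p r q : ℤ)
  q_pos : 0 < q

/-- The non-vertical rational line with equation `A x - B y + C = 0`. -/
structure RatLine where
  (A B C : ℤ)
  B_pos : 0 < B

namespace RatLine

/-- The value of the equation of `L` at the point `(x, y)`. -/
def form (L : RatLine) (x y : ℝ) : ℝ := L.A * x - L.B * y + L.C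

/-- The second coordinate of the point of `L` with first coordinate `x`. -/
noncomputable def ordinate (L : RatLine) (x : ℝ) : ℝ := (L.A * x + L.C) / L.B

/-- The value of the homogenized equation of `L` at `(p, r, q)`; it vanishes iff `P` lies
on `L`. -/
def homogForm (L : RatLine) (P : RatPoint) : ℤ := L.A * P.p - L.B * P.r + L.C * P.q

/-- The common denominator of the coordinates `L₁.meetX L₂ / L₁.det L₂` and
`L₁.meetY L₂ / L₁.det L₂` of the intersection of two lines, which are parallel iff it is zero. -/
def det (L₁ L₂ : RatLine) : ℤ := L₁.A * L₂.B - L₂.A * L₁.B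

/-- The first numerator of the intersection of two lines, see `RatLine.det`. -/
def meetX (L₁ L₂ : RatLine) : ℤ := L₂.C * L₁.B - L₁.C * L₂.B

/-- The second numerator of the intersection of two lines, see `RatLine.det`. -/
def meetY (L₁ L₂ : RatLine) : ℤ := L₁.A * L₂.C - L₂.A * L₁.C

variable (L L₁ L₂ : RatLine) (P P₁ P₂ : RatPoint)

lemma one_le_B : (1 : ℝ) ≤ L.B := mod_cast L.B_pos

lemma cast_B_pos : (0 : ℝ) < L.B := mod_cast L.B_pos

lemma B_mul_ordinate_sub (x y : ℝ) : L.B * (L.ordinate x - y) = L.form x y := by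
  have := L.one_le_B
  rw [ordinate, form]
  field_simp
  ring

lemma q_mul_form_sub_homogForm (x y : ℝ) :
    P.q * L.form x y - L.homogForm P = L.A * (P.q * x - P.p) - L.B * (P.q * y - P.r) := by
  rw [form, homogForm]
  push_cast
  ring

lemma det_mul_sub_meetX (x y : ℝ) :
    L₁.det L₂ * x - L₁.meetX L₂ = L₂.B * L₁.form x y - L₁.B * L₂.form x y := by
  simp only [det, meetX, form, Int.cast_sub, Int.cast_mul]
  ring

lemma det_mul_sub_meetY (x y : ℝ) :
    L₁.det L₂ * y - L₁.meetY L₂ = L₂.A * L₁.form x y - L₁.A * L₂.form x y := by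
  simp only [det, meetY, form, Int.cast_sub, Int.cast_mul]
  ring

variable {L L₁ L₂ P P₁ P₂}

lemma ordinate_eq_of_det_eq_zero (hD : L₁.det L₂ = 0) (hX : L₁.meetX L₂ = 0) (x : ℝ) :
    L₁.ordinate x = L₂.ordinate x := by
  have h₁ := L₁.one_le_B
  have h₂ := L₂.one_le_B
  have hDr : (L₁.A : ℝ) * L₂.B - L₂.A * L₁.B = 0 := mod_cast hD
  have hXr : (L₂.C : ℝ) * L₁.B - L₁.C * L₂.B = 0 := mod_cast hX
  rw [ordinate, ordinate, div_eq_div_iff (by positivity) (by positivity)]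
  linear_combination x * hDr - hXr

lemma meetX_eq_zero (hD : L₁.det L₂ = 0) (h₁ : L₁.homogForm P = 0) (h₂ : L₂.homogForm P = 0) :
    L₁.meetX L₂ = 0 := by
  simp only [det, homogForm] at hD h₁ h₂
  rw [meetX]
  refine (mul_eq_zero.1 ?_).resolve_left P.q_pos.ne'
  linear_combination L₁.B * h₂ - L₂.B * h₁ + P.p * hD

lemma r_div_q_eq (hD : L₁.det L₂ ≠ 0) (h₁₁ : L₁.homogForm P₁ = 0) (h₁₂ : L₁.homogForm P₂ = 0)
    (h₂₁ : L₂.homogForm P₁ = 0) (h₂₂ : L₂.homogForm P₂ = 0) :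
    (P₁.r : ℝ) / P₁.q = P₂.r / P₂.q := by
  have hq₁ : (P₁.q : ℝ) ≠ 0 := mod_cast P₁.q_pos.ne'
  have hq₂ : (P₂.q : ℝ) ≠ 0 := mod_cast P₂.q_pos.ne'
  rw [div_eq_div_iff hq₁ hq₂]
  simp only [homogForm, det] at h₁₁ h₁₂ h₂₁ h₂₂ hD
  refine mod_cast mul_left_cancel₀ hD ?_
  linear_combination L₂.A * P₂.q * h₁₁ - L₁.A * P₂.q * h₂₁ - L₂.A * P₁.q * h₁₂ + L₁.A * P₁.q * h₂₂

end RatLine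

namespace RatPoint

lemma one_le_q (P : RatPoint) : (1 : ℝ) ≤ P.q := mod_cast P.q_pos

lemma cast_q_pos (P : RatPoint) : (0 : ℝ) < P.q := mod_cast P.q_pos

lemma q_rpow_mul_q_rpow (P : RatPoint) {α β : ℝ} (hαβ : α + β = 1) :
    (P.q : ℝ) ^ α * (P.q : ℝ) ^ β = P.q := by
  rw [← Real.rpow_add P.cast_q_pos, hαβ, Real.rpow_one]

lemma exists_of_ne_zero {D : ℤ} (hD : D ≠ 0) (X Y : ℤ) : ∃ P : RatPoint, (P.q : ℝ) = |(D : ℝ)| ∧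
    ∀ x y : ℝ, |P.q * x - P.p| = |D * x - X| ∧ |P.q * y - P.r| = |D * y - Y| := by
  rcases lt_or_gt_of_ne hD with h | h
  · refine ⟨⟨-X, -Y, -D, by omega⟩, ?_, fun x y => ⟨?_, ?_⟩⟩
    · rw [abs_of_neg (Int.cast_lt_zero.2 h), Int.cast_neg]
    all_goals rw [← abs_neg]; congr 1; push_cast; ring
  · exact ⟨⟨X, Y, D, h⟩, (abs_of_pos (Int.cast_pos.2 h)).symm, fun x y => ⟨rfl, rfl⟩⟩

/-- The point `P` approximates `(x, y)` with weights `α`, `β` and quality `ε`, that is, it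
witnesses the failure of the condition defining `BAD(α, β)` with constant `ε`. -/
structure IsClose (P : RatPoint) (ε x α β y : ℝ) : Prop where
  left : (P.q : ℝ) ^ α * |P.q * x - P.p| < ε
  right : (P.q : ℝ) ^ β * |P.q * y - P.r| < ε

lemma IsClose.abs_form_sub_le {P : RatPoint} {L : RatLine} {ε x α β y K : ℝ}
    (h : P.IsClose ε x α β y) (hK : 0 ≤ K) (hA : |(L.A : ℝ)| ≤ K * (P.q : ℝ) ^ α)
    (hB : (L.B : ℝ) ≤ K * (P.q : ℝ) ^ β) : |P.q * L.form x y - L.homogForm P| ≤ 2 * K * ε := by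
  rw [L.q_mul_form_sub_homogForm]
  calc |L.A * (P.q * x - P.p) - L.B * (P.q * y - P.r)|
      ≤ |(L.A : ℝ)| * |P.q * x - P.p| + L.B * |P.q * y - P.r| := by
        refine (abs_sub _ _).trans_eq ?_
        rw [abs_mul, abs_mul, abs_of_nonneg L.cast_B_pos.le]
    _ ≤ K * (P.q : ℝ) ^ α * |P.q * x - P.p| + K * (P.q : ℝ) ^ β * |P.q * y - P.r| := by gcongr
    _ = K * ((P.q : ℝ) ^ α * |P.q * x - P.p|) + K * ((P.q : ℝ) ^ β * |P.q * y - P.r|) := by ring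
    _ ≤ K * ε + K * ε := by gcongr; exacts [h.left.le, h.right.le]
    _ = 2 * K * ε := by ring

end RatPoint

/-- `P` is a rational point too close to `(x, y)` and `L` is a line through it. The height `q B` of
the pair is of order `R ^ n`, up to the normalization `R ^ 4`, and `q ^ β / B` is of
order `R ^ t`. -/
structure DangerousPair (R x α β : ℝ) (n t : ℕ) (y : ℝ) (P : RatPoint) (L : RatLine) : Prop where
  isClose : P.IsClose (1 / R ^ 7) x α β y
  homogForm_eq_zero : L.homogForm P = 0
  abs_A_le : |(L.A : ℝ)| ≤ (P.q : ℝ) ^ α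
  le_height : R ^ n ≤ R ^ 4 * (P.q * L.B)
  height_lt : R ^ 4 * (P.q * L.B) < R ^ (n + 1)
  mul_le : L.B * R ^ t ≤ (P.q : ℝ) ^ β
  lt_mul : (P.q : ℝ) ^ β < L.B * R ^ (t + 1)

namespace DangerousPair

variable {R x α β y y₁ y₂ : ℝ} {n t k : ℕ} {P P₁ P₂ : RatPoint} {L L₁ L₂ : RatLine}

lemma B_le (h : DangerousPair R x α β n t y P L) (hR : 1 ≤ R) : (L.B : ℝ) ≤ (P.q : ℝ) ^ β :=
  (le_mul_of_one_le_right L.cast_B_pos.le (one_le_pow₀ hR)).trans h.mul_le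

lemma q_mul_abs_form_le (h : DangerousPair R x α β n t y P L) (hR : 1 ≤ R) :
    P.q * |L.form x y| ≤ 2 / R ^ 7 := by
  have hform := h.isClose.abs_form_sub_le zero_le_one (by simpa using h.abs_A_le)
    (by simpa using h.B_le hR)
  rwa [h.homogForm_eq_zero, Int.cast_zero, sub_zero, abs_mul,
    abs_of_pos P.cast_q_pos, mul_one, mul_one_div] at hform

lemma le_of_height_mul_le (h : DangerousPair R x α β n t y P L) (hR : 2 ≤ R) {d : ℝ}
    (hd : P.q * L.B * d ≤ 2 / R ^ 7) : d ≤ 1 / R ^ (n + 1) := by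
  have hq := P.one_le_q
  have hB := L.one_le_B
  have hd' : d ≤ 2 / R ^ 7 / (P.q * L.B) := (le_div_iff₀' (by positivity)).2 hd
  refine hd'.trans ?_
  rw [div_div, div_le_div_iff₀ (by positivity) (by positivity)]
  calc 2 * R ^ (n + 1) = 2 * R * R ^ n := by ring
    _ ≤ R * R * (R ^ 4 * (P.q * L.B)) := by gcongr; exact h.le_height
    _ = R ^ 6 * (P.q * L.B) := by ring
    _ ≤ 1 * (R ^ 7 * (P.q * L.B)) := by
      rw [one_mul]
      gcongr
      exacts [by linarith, by norm_num]

lemma abs_sub_ordinate_le (h : DangerousPair R x α β n t y P L) (hR : 2 ≤ R) :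
    |y - L.ordinate x| ≤ 1 / R ^ (n + 1) := by
  refine h.le_of_height_mul_le hR ?_
  rw [abs_sub_comm, mul_assoc, ← abs_of_pos L.cast_B_pos, ← abs_mul,
    L.B_mul_ordinate_sub]
  exact h.q_mul_abs_form_le (by linarith)

lemma abs_sub_r_div_q_le (h : DangerousPair R x α β n t y P L) (hR : 2 ≤ R) :
    |y - P.r / P.q| ≤ 1 / R ^ (n + 1) := by
  have hq := P.one_le_q
  refine h.le_of_height_mul_le hR ?_
  calc P.q * L.B * |y - P.r / P.q| = L.B * |P.q * y - P.r| := by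
        have hqy : (P.q : ℝ) * y - P.r = P.q * (y - P.r / P.q) := by field_simp
        rw [hqy, abs_mul, abs_of_pos P.cast_q_pos]
        ring
    _ ≤ (P.q : ℝ) ^ β * |P.q * y - P.r| := by gcongr; exact h.B_le (by linarith)
    _ ≤ 1 / R ^ 7 := h.isClose.right.le
    _ ≤ 2 / R ^ 7 := by gcongr; norm_num

lemma q_mul_rpow_lt (h₁ : DangerousPair R x α β n t y₁ P₁ L₁)
    (h₂ : DangerousPair R x α β n t y₂ P₂ L₂) (hR : 0 < R) :
    P₂.q * (P₂.q : ℝ) ^ β < R ^ 2 * (P₁.q * (P₁.q : ℝ) ^ β) := by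
  have hq₁ := P₁.cast_q_pos
  have hq₂ := P₂.cast_q_pos
  refine lt_of_mul_lt_mul_left (a := R ^ 4) ?_ (by positivity)
  calc R ^ 4 * (P₂.q * (P₂.q : ℝ) ^ β) < R ^ 4 * (P₂.q * (L₂.B * R ^ (t + 1))) := by
        gcongr; exact h₂.lt_mul
    _ = R ^ 4 * (P₂.q * L₂.B) * R ^ (t + 1) := by ring
    _ ≤ R ^ (n + 1) * R ^ (t + 1) := by gcongr; exact h₂.height_lt.le
    _ = R ^ 2 * (R ^ n * R ^ t) := by ring
    _ ≤ R ^ 2 * (R ^ 4 * (P₁.q * L₁.B) * R ^ t) := by gcongr; exact h₁.le_height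
    _ = R ^ 6 * (P₁.q * (L₁.B * R ^ t)) := by ring
    _ ≤ R ^ 6 * (P₁.q * (P₁.q : ℝ) ^ β) := by gcongr; exact h₁.mul_le
    _ = R ^ 4 * (R ^ 2 * (P₁.q * (P₁.q : ℝ) ^ β)) := by ring

lemma q_le (h₁ : DangerousPair R x α β n t y₁ P₁ L₁) (h₂ : DangerousPair R x α β n t y₂ P₂ L₂)
    (hβ : 0 ≤ β) (hR : 1 ≤ R) : (P₂.q : ℝ) ≤ R ^ 2 * P₁.q := by
  have hq₁ := P₁.cast_q_pos
  have hq₂ := P₂.cast_q_pos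
  by_contra! hlt
  have hmono : (P₁.q : ℝ) ^ β ≤ (P₂.q : ℝ) ^ β :=
    Real.rpow_le_rpow hq₁.le ((le_mul_of_one_le_left hq₁.le (one_le_pow₀ hR)).trans hlt.le) hβ
  refine (h₁.q_mul_rpow_lt h₂ (by linarith)).not_ge ?_
  rw [← mul_assoc]
  gcongr

lemma q_rpow_le (h₁ : DangerousPair R x α β n t y₁ P₁ L₁) (h₂ : DangerousPair R x α β n t y₂ P₂ L₂)
    (hβ : 0 ≤ β) (hR : 1 ≤ R) {s : ℝ} (hs0 : 0 ≤ s) (hs1 : s ≤ 1) :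
    (P₂.q : ℝ) ^ s ≤ R ^ 2 * (P₁.q : ℝ) ^ s :=
  rpow_le_mul_rpow P₂.cast_q_pos.le P₁.cast_q_pos.le (one_le_pow₀ hR) hs0 hs1 (h₁.q_le h₂ hβ hR)

lemma q_mul_abs_form_le_of_abs_sub_le (h₁ : DangerousPair R x α β n t y₁ P₁ L₁)
    (h₂ : DangerousPair R x α β n t y₂ P₂ L₂) (hβ : 0 ≤ β) (hR : 1 ≤ R)
    (hy : |y₁ - y₂| ≤ R ^ k / R ^ n) : P₁.q * |L₂.form x y₁| ≤ 2 / R ^ 5 + R ^ k / R := by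
  have hq₁ := P₁.cast_q_pos
  have hq₂ := P₂.cast_q_pos
  have hB₂ := L₂.cast_B_pos
  have hq : (P₁.q : ℝ) ≤ R ^ 2 * P₂.q := h₂.q_le h₁ hβ hR
  have hshift : |L₂.form x y₁| ≤ |L₂.form x y₂| + L₂.B * |y₁ - y₂| := by
    have hsub : L₂.form x y₁ = L₂.form x y₂ - L₂.B * (y₁ - y₂) := by
      rw [RatLine.form, RatLine.form]; ring
    rw [hsub]
    refine (abs_sub _ _).trans_eq ?_
    rw [abs_mul (L₂.B : ℝ), abs_of_pos L₂.cast_B_pos]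
  have hown : P₁.q * |L₂.form x y₂| ≤ 2 / R ^ 5 :=
    calc P₁.q * |L₂.form x y₂| ≤ R ^ 2 * P₂.q * |L₂.form x y₂| := by gcongr
      _ = R ^ 2 * (P₂.q * |L₂.form x y₂|) := by ring
      _ ≤ R ^ 2 * (2 / R ^ 7) := by gcongr; exact h₂.q_mul_abs_form_le hR
      _ = 2 / R ^ 5 := by field_simp
  have hvary : P₁.q * (L₂.B * |y₁ - y₂|) ≤ R ^ k / R :=
    calc P₁.q * (L₂.B * |y₁ - y₂|) ≤ R ^ 2 * P₂.q * (L₂.B * (R ^ k / R ^ n)) := by gcongr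
      _ = R ^ 4 * (P₂.q * L₂.B) * (R ^ k / R ^ n / R ^ 2) := by field_simp
      _ ≤ R ^ (n + 1) * (R ^ k / R ^ n / R ^ 2) := by gcongr; exact h₂.height_lt.le
      _ = R ^ k / R := by field_simp; ring
  calc P₁.q * |L₂.form x y₁| ≤ P₁.q * |L₂.form x y₂| + P₁.q * (L₂.B * |y₁ - y₂|) := by
        rw [← mul_add]; gcongr
    _ ≤ 2 / R ^ 5 + R ^ k / R := add_le_add hown hvary

lemma homogForm_eq_zero_of_abs_sub_le (h₁ : DangerousPair R x α β n t y₁ P₁ L₁)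
    (h₂ : DangerousPair R x α β n t y₂ P₂ L₂) (hα : 0 ≤ α) (hβ : 0 ≤ β) (hαβ : α + β = 1)
    (hR : 2 ≤ R) (hy : |y₁ - y₂| ≤ 1 / R ^ n) : L₂.homogForm P₁ = 0 := by
  have hR₁ : 1 ≤ R := by linarith
  have ha := h₁.q_rpow_le h₂ hβ hR₁ hα (by linarith)
  have hb := h₁.q_rpow_le h₂ hβ hR₁ hβ (by linarith)
  have hdiff : |P₁.q * L₂.form x y₁ - L₂.homogForm P₁| ≤ 2 * R ^ 2 * (1 / R ^ 7) :=
    h₁.isClose.abs_form_sub_le (by positivity) (h₂.abs_A_le.trans ha) ((h₂.B_le hR₁).trans hb)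
  have hform : |P₁.q * L₂.form x y₁| ≤ 2 / R ^ 5 + 1 / R := by
    rw [abs_mul, abs_of_pos P₁.cast_q_pos]
    simpa using h₁.q_mul_abs_form_le_of_abs_sub_le h₂ hβ hR₁ (k := 0) (by simpa using hy)
  have hlt : |(L₂.homogForm P₁ : ℝ)| < 1 :=
    calc |(L₂.homogForm P₁ : ℝ)|
        = |P₁.q * L₂.form x y₁ - (P₁.q * L₂.form x y₁ - L₂.homogForm P₁)| := by
          rw [sub_sub_cancel]
      _ ≤ (2 / R ^ 5 + 1 / R) + 2 * R ^ 2 * (1 / R ^ 7) :=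
          (abs_sub _ _).trans (add_le_add hform hdiff)
      _ = 4 / R ^ 5 + 1 / R := by field_simp; ring
      _ ≤ 4 / 2 ^ 5 + 1 / 2 := by gcongr
      _ < 1 := by norm_num
  exact Int.abs_lt_one_iff.1 (mod_cast hlt)

lemma abs_sub_ordinate_le_or_abs_sub_r_div_q_le (h₁ : DangerousPair R x α β n t y₁ P₁ L₁)
    (h₂ : DangerousPair R x α β n t y₂ P₂ L₂) (hα : 0 ≤ α) (hβ : 0 ≤ β) (hαβ : α + β = 1)
    (hR : 2 ≤ R) (hy : |y₁ - y₂| ≤ 1 / R ^ n) :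
    |y₂ - L₁.ordinate x| ≤ 1 / R ^ (n + 1) ∨ |y₂ - P₁.r / P₁.q| ≤ 1 / R ^ (n + 1) := by
  have h₂₁ : L₂.homogForm P₁ = 0 := h₁.homogForm_eq_zero_of_abs_sub_le h₂ hα hβ hαβ hR hy
  have h₁₂ : L₁.homogForm P₂ = 0 :=
    h₂.homogForm_eq_zero_of_abs_sub_le h₁ hα hβ hαβ hR (by rwa [abs_sub_comm])
  by_cases hD : L₁.det L₂ = 0
  · left
    rw [RatLine.ordinate_eq_of_det_eq_zero hD
      (RatLine.meetX_eq_zero hD h₁.homogForm_eq_zero h₂₁)]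
    exact h₂.abs_sub_ordinate_le hR
  · right
    rw [RatLine.r_div_q_eq hD h₁.homogForm_eq_zero h₁₂ h₂₁ h₂.homogForm_eq_zero]
    exact h₂.abs_sub_r_div_q_le hR

lemma q_mul_add_abs_form_le (h₁ : DangerousPair R x α β n t y₁ P₁ L₁)
    (h₂ : DangerousPair R x α β n t y₂ P₂ L₂) (hβ : 0 ≤ β) (hR : 2 ≤ R)
    (hy : |y₁ - y₂| ≤ R ^ k / R ^ n) :
    P₁.q * (R ^ 2 * |L₁.form x y₁| + |L₂.form x y₁|) ≤ R ^ k := by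
  have hR₁ : 1 ≤ R := by linarith
  calc P₁.q * (R ^ 2 * |L₁.form x y₁| + |L₂.form x y₁|)
      = R ^ 2 * (P₁.q * |L₁.form x y₁|) + P₁.q * |L₂.form x y₁| := by ring
    _ ≤ R ^ 2 * (2 / R ^ 7) + (2 / R ^ 5 + R ^ k / R) := by
        gcongr
        exacts [h₁.q_mul_abs_form_le hR₁, h₁.q_mul_abs_form_le_of_abs_sub_le h₂ hβ hR₁ hy]
    _ = 4 / R ^ 5 + R ^ k / R := by field_simp; ring
    _ ≤ 4 / 2 ^ 5 + R ^ k / 2 := by gcongr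
    _ ≤ R ^ k := by linarith [one_le_pow₀ hR₁ (n := k)]

lemma q_rpow_mul_abs_det_mul_sub_meetX_le (h₁ : DangerousPair R x α β n t y₁ P₁ L₁)
    (h₂ : DangerousPair R x α β n t y₂ P₂ L₂) (hα : 0 ≤ α) (hβ : 0 ≤ β) (hαβ : α + β = 1)
    (hR : 2 ≤ R) (hy : |y₁ - y₂| ≤ R ^ k / R ^ n) :
    (P₁.q : ℝ) ^ α * R ^ t * |L₁.det L₂ * x - L₁.meetX L₂| ≤ R ^ k := by
  have hR₁ : 1 ≤ R := by linarith
  have hq₁ := P₁.cast_q_pos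
  have hB₂ : L₂.B * R ^ t ≤ R ^ 2 * (P₁.q : ℝ) ^ β :=
    h₂.mul_le.trans (h₁.q_rpow_le h₂ hβ hR₁ hβ (by linarith))
  have hB₁ := h₁.mul_le
  rw [L₁.det_mul_sub_meetX L₂ x y₁]
  calc (P₁.q : ℝ) ^ α * R ^ t * |L₂.B * L₁.form x y₁ - L₁.B * L₂.form x y₁|
      ≤ (P₁.q : ℝ) ^ α * R ^ t * (L₂.B * |L₁.form x y₁| + L₁.B * |L₂.form x y₁|) := by
        gcongr
        refine (abs_sub _ _).trans_eq ?_
        rw [abs_mul, abs_mul, abs_of_pos L₁.cast_B_pos, abs_of_pos L₂.cast_B_pos]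
    _ = (P₁.q : ℝ) ^ α * (L₂.B * R ^ t * |L₁.form x y₁| + L₁.B * R ^ t * |L₂.form x y₁|) := by
        ring
    _ ≤ (P₁.q : ℝ) ^ α * (R ^ 2 * (P₁.q : ℝ) ^ β * |L₁.form x y₁| +
          (P₁.q : ℝ) ^ β * |L₂.form x y₁|) := by
        gcongr (P₁.q : ℝ) ^ α * (?_ * |L₁.form x y₁| + ?_ * |L₂.form x y₁|)
    _ = (P₁.q : ℝ) ^ α * (P₁.q : ℝ) ^ β * (R ^ 2 * |L₁.form x y₁| + |L₂.form x y₁|) := by ring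
    _ ≤ R ^ k := by
        rw [P₁.q_rpow_mul_q_rpow hαβ]
        exact h₁.q_mul_add_abs_form_le h₂ hβ hR hy

lemma q_rpow_mul_abs_det_mul_sub_meetY_le (h₁ : DangerousPair R x α β n t y₁ P₁ L₁)
    (h₂ : DangerousPair R x α β n t y₂ P₂ L₂) (hα : 0 ≤ α) (hβ : 0 ≤ β) (hαβ : α + β = 1)
    (hR : 2 ≤ R) (hy : |y₁ - y₂| ≤ R ^ k / R ^ n) :
    (P₁.q : ℝ) ^ β * |L₁.det L₂ * y₁ - L₁.meetY L₂| ≤ R ^ k := by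
  have hR₁ : 1 ≤ R := by linarith
  have hq₁ := P₁.cast_q_pos
  rw [L₁.det_mul_sub_meetY L₂ x y₁]
  calc (P₁.q : ℝ) ^ β * |L₂.A * L₁.form x y₁ - L₁.A * L₂.form x y₁|
      ≤ (P₁.q : ℝ) ^ β * (|(L₂.A : ℝ)| * |L₁.form x y₁| + |(L₁.A : ℝ)| * |L₂.form x y₁|) := by
        gcongr
        refine (abs_sub _ _).trans_eq ?_
        rw [abs_mul, abs_mul]
    _ ≤ (P₁.q : ℝ) ^ β * (R ^ 2 * (P₁.q : ℝ) ^ α * |L₁.form x y₁| +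
          (P₁.q : ℝ) ^ α * |L₂.form x y₁|) := by
        gcongr
        exacts [h₂.abs_A_le.trans (h₁.q_rpow_le h₂ hβ hR₁ hα (by linarith)), h₁.abs_A_le]
    _ = (P₁.q : ℝ) ^ α * (P₁.q : ℝ) ^ β * (R ^ 2 * |L₁.form x y₁| + |L₂.form x y₁|) := by ring
    _ ≤ R ^ k := by
        rw [P₁.q_rpow_mul_q_rpow hαβ]
        exact h₁.q_mul_add_abs_form_le h₂ hβ hR hy

lemma abs_det_mul_le (h₁ : DangerousPair R x α β n t y₁ P₁ L₁)
    (h₂ : DangerousPair R x α β n t y₂ P₂ L₂) (hα : 0 ≤ α) (hβ : 0 ≤ β) (hαβ : α + β = 1)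
    (hR : 2 ≤ R) : |(L₁.det L₂ : ℝ)| * R ^ t ≤ R ^ 3 * P₁.q := by
  have hR₁ : 1 ≤ R := by linarith
  have hq₁ := P₁.cast_q_pos
  have hq₂ := P₂.cast_q_pos
  have hdet : |(L₁.det L₂ : ℝ)| ≤ |(L₁.A : ℝ)| * L₂.B + |(L₂.A : ℝ)| * L₁.B := by
    rw [RatLine.det, Int.cast_sub, Int.cast_mul, Int.cast_mul]
    refine (abs_sub _ _).trans_eq ?_
    rw [abs_mul, abs_mul, abs_of_pos L₁.cast_B_pos, abs_of_pos L₂.cast_B_pos]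
  calc |(L₁.det L₂ : ℝ)| * R ^ t
      ≤ (|(L₁.A : ℝ)| * L₂.B + |(L₂.A : ℝ)| * L₁.B) * R ^ t := by gcongr
    _ = |(L₁.A : ℝ)| * (L₂.B * R ^ t) + |(L₂.A : ℝ)| * (L₁.B * R ^ t) := by ring
    _ ≤ (P₁.q : ℝ) ^ α * (P₂.q : ℝ) ^ β + (P₂.q : ℝ) ^ α * (P₁.q : ℝ) ^ β := by
        have hB₁ := L₁.cast_B_pos
        have hB₂ := L₂.cast_B_pos
        gcongr ?_ * ?_ + ?_ * ?_
        exacts [h₁.abs_A_le, h₂.mul_le, h₂.abs_A_le, h₁.mul_le]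
    _ ≤ (P₁.q : ℝ) ^ α * (R ^ 2 * (P₁.q : ℝ) ^ β) +
          R ^ 2 * (P₁.q : ℝ) ^ α * (P₁.q : ℝ) ^ β := by
        gcongr
        exacts [h₁.q_rpow_le h₂ hβ hR₁ hβ (by linarith), h₁.q_rpow_le h₂ hβ hR₁ hα (by linarith)]
    _ = 2 * R ^ 2 * ((P₁.q : ℝ) ^ α * (P₁.q : ℝ) ^ β) := by ring
    _ ≤ R * R ^ 2 * P₁.q := by rw [P₁.q_rpow_mul_q_rpow hαβ]; gcongr
    _ = R ^ 3 * P₁.q := by ring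

lemma ordinate_eq_of_det_eq_zero (h₁ : DangerousPair R x α β n t y₁ P₁ L₁)
    (h₂ : DangerousPair R x α β n t y₂ P₂ L₂) (hα : 0 ≤ α) (hβ : 0 ≤ β) (hαβ : α + β = 1)
    (hR : 2 ≤ R) (hkt : R ^ k < R ^ t) (hy : |y₁ - y₂| ≤ R ^ k / R ^ n) (hD : L₁.det L₂ = 0) :
    L₁.ordinate x = L₂.ordinate x := by
  have hX : |(L₁.meetX L₂ : ℝ)| < 1 := by
    refine lt_of_mul_lt_mul_left (a := R ^ t) ?_ (by positivity)
    calc R ^ t * |(L₁.meetX L₂ : ℝ)| ≤ (P₁.q : ℝ) ^ α * R ^ t * |(L₁.meetX L₂ : ℝ)| := by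
          rw [mul_assoc]
          exact le_mul_of_one_le_left (by positivity) (Real.one_le_rpow P₁.one_le_q hα)
      _ ≤ R ^ k := by
          simpa [hD] using h₁.q_rpow_mul_abs_det_mul_sub_meetX_le h₂ hα hβ hαβ hR hy
      _ < R ^ t * 1 := by rw [mul_one]; exact hkt
  exact RatLine.ordinate_eq_of_det_eq_zero hD (Int.abs_lt_one_iff.1 (mod_cast hX)) x

lemma height_lt_of_mul_le (h : DangerousPair R x α β n t y P L) (hR : 1 ≤ R) {Q : RatPoint}
    (hQ : Q.q * R ^ t ≤ R ^ 3 * P.q)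
    (hQβ : R ^ (k + 11) * (Q.q : ℝ) ^ β ≤ R ^ 3 * (P.q : ℝ) ^ β) :
    R ^ k * (R ^ 4 * (Q.q * (Q.q : ℝ) ^ β)) < R ^ n := by
  have hq := P.cast_q_pos
  have hQpos := Q.cast_q_pos
  refine lt_of_mul_lt_mul_left (a := R ^ 7 * R ^ t) ?_ (by positivity)
  calc R ^ 7 * R ^ t * (R ^ k * (R ^ 4 * (Q.q * (Q.q : ℝ) ^ β)))
      = (Q.q * R ^ t) * (R ^ (k + 11) * (Q.q : ℝ) ^ β) := by ring
    _ ≤ (R ^ 3 * P.q) * (R ^ 3 * (P.q : ℝ) ^ β) := by gcongr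
    _ < (R ^ 3 * P.q) * (R ^ 3 * (L.B * R ^ (t + 1))) := by gcongr; exact h.lt_mul
    _ = R ^ 4 * (P.q * L.B) * (R ^ 3 * R ^ t) := by ring
    _ ≤ R ^ (n + 1) * (R ^ 3 * R ^ t) := by gcongr; exact h.height_lt.le
    _ = R ^ 4 * R ^ t * R ^ n := by ring
    _ ≤ R ^ 7 * R ^ t * R ^ n := by gcongr; norm_num

/- The intersection of the two lines is a rational point close to `(x, y₁)` and of smaller
height. -/
lemma exists_isClose_of_det_ne_zero (h₁ : DangerousPair R x α β n t y₁ P₁ L₁)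
    (h₂ : DangerousPair R x α β n t y₂ P₂ L₂) (hα : 0 ≤ α) (hβ : 0 ≤ β) (hαβ : α + β = 1)
    (hR : 2 ≤ R) (hkt : R ^ (k + 11) ≤ R ^ t) (hktβ : R ^ (k + 11) ≤ (R ^ t) ^ β)
    (hy : |y₁ - y₂| ≤ R ^ k / R ^ n) (hD : L₁.det L₂ ≠ 0) :
    ∃ Q : RatPoint, Q.IsClose (1 / R ^ 7) x α β y₁ ∧
      R ^ k * (R ^ 4 * (Q.q * (Q.q : ℝ) ^ β)) < R ^ n := by
  have hR₁ : 1 < R := by linarith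
  have hq₁ := P₁.cast_q_pos
  obtain ⟨Q, hQ, hQsub⟩ := RatPoint.exists_of_ne_zero hD (L₁.meetX L₂) (L₁.meetY L₂)
  have hQpos := Q.cast_q_pos
  have hQt : Q.q * R ^ t ≤ R ^ 3 * P₁.q := hQ ▸ h₁.abs_det_mul_le h₂ hα hβ hαβ hR
  have hQα : (Q.q : ℝ) ^ α ≤ (P₁.q : ℝ) ^ α := by
    refine Real.rpow_le_rpow hQpos.le (le_of_mul_le_mul_left ?_ (by positivity : 0 < R ^ 3)) hα
    calc R ^ 3 * Q.q ≤ R ^ (k + 11) * Q.q := by gcongr; exacts [hR₁.le, by omega]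
      _ ≤ R ^ t * Q.q := by gcongr
      _ ≤ R ^ 3 * P₁.q := by rwa [mul_comm]
  have hQβ : R ^ (k + 11) * (Q.q : ℝ) ^ β ≤ R ^ 3 * (P₁.q : ℝ) ^ β :=
    mul_rpow_le_mul_rpow hQpos.le (by positivity) hq₁.le (one_le_pow₀ hR₁.le) hβ (by linarith)
      hktβ hQt
  refine ⟨Q, ⟨lt_one_div_pow_of_mul_le hR₁ (k := k) ?_, lt_one_div_pow_of_mul_le hR₁ (k := k) ?_⟩,
    h₁.height_lt_of_mul_le hR₁.le hQt hQβ⟩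
  · rw [(hQsub x y₁).1]
    calc R ^ (k + 11) * ((Q.q : ℝ) ^ α * |L₁.det L₂ * x - L₁.meetX L₂|)
        ≤ R ^ t * ((P₁.q : ℝ) ^ α * |L₁.det L₂ * x - L₁.meetX L₂|) := by gcongr
      _ = (P₁.q : ℝ) ^ α * R ^ t * |L₁.det L₂ * x - L₁.meetX L₂| := by ring
      _ ≤ R ^ k := h₁.q_rpow_mul_abs_det_mul_sub_meetX_le h₂ hα hβ hαβ hR hy
      _ ≤ R ^ 3 * R ^ k := le_mul_of_one_le_left (by positivity) (one_le_pow₀ hR₁.le)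
  · rw [(hQsub x y₁).2, ← mul_assoc]
    calc R ^ (k + 11) * (Q.q : ℝ) ^ β * |L₁.det L₂ * y₁ - L₁.meetY L₂|
        ≤ R ^ 3 * (P₁.q : ℝ) ^ β * |L₁.det L₂ * y₁ - L₁.meetY L₂| := by gcongr
      _ ≤ R ^ 3 * R ^ k := by
        rw [mul_assoc]
        gcongr
        exact h₁.q_rpow_mul_abs_det_mul_sub_meetY_le h₂ hα hβ hαβ hR hy

lemma ordinate_eq_or_exists_isClose (h₁ : DangerousPair R x α β n t y₁ P₁ L₁)
    (h₂ : DangerousPair R x α β n t y₂ P₂ L₂) (hα : 0 ≤ α) (hβ : 0 ≤ β) (hαβ : α + β = 1)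
    (hR : 2 ≤ R) (hktβ : R ^ (k + 11) ≤ (R ^ t) ^ β) (hy : |y₁ - y₂| ≤ R ^ k / R ^ n) :
    L₁.ordinate x = L₂.ordinate x ∨ ∃ Q : RatPoint, Q.IsClose (1 / R ^ 7) x α β y₁ ∧
      R ^ k * (R ^ 4 * (Q.q * (Q.q : ℝ) ^ β)) < R ^ n := by
  have hR₁ : 1 < R := by linarith
  have hkt : R ^ (k + 11) ≤ R ^ t := hktβ.trans <|
    (Real.rpow_le_rpow_of_exponent_le (one_le_pow₀ hR₁.le) (by linarith)).trans_eq
      (Real.rpow_one _)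
  by_cases hD : L₁.det L₂ = 0
  · have hlt : R ^ k < R ^ t := (pow_lt_pow_right₀ hR₁ (by omega)).trans_le hkt
    exact .inl (h₁.ordinate_eq_of_det_eq_zero h₂ hα hβ hαβ hR hlt hy hD)
  · exact .inr (h₁.exists_isClose_of_det_ne_zero h₂ hα hβ hαβ hR hkt hktβ hy hD)

end DangerousPair

end DangerousPairs

section BadlyApproximable

/-- The number `x` is badly approximable with exponent `τ` and constant `c`. -/
def IsBadlyApproximable (τ c x : ℝ) : Prop := ∀ q : ℕ, 0 < q → c ≤ (q : ℝ) ^ τ * nint (q * x)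

lemma nint_le_abs_sub (x : ℝ) (p : ℤ) : nint x ≤ |x - p| := round_le x p

namespace IsBadlyApproximable

variable {τ τ' c c' x : ℝ}

lemma mono_left (h : IsBadlyApproximable τ c x) (hτ : τ ≤ τ') : IsBadlyApproximable τ' c x := by
  intro q hq
  refine (h q hq).trans ?_
  have hq₁ : (1 : ℝ) ≤ q := mod_cast hq
  rw [nint]
  gcongr

lemma mono_right (h : IsBadlyApproximable τ c x) (hc : c' ≤ c) : IsBadlyApproximable τ c' x :=
  fun q hq => hc.trans (h q hq)

lemma le_rpow_mul_abs_sub (h : IsBadlyApproximable τ c x) {q : ℤ} (hq : q ≠ 0) (p : ℤ) :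
    c ≤ |(q : ℝ)| ^ τ * |q * x - p| := by
  obtain ⟨n, rfl | rfl⟩ := q.eq_nat_or_neg
  all_goals
    have hn : 0 < n := by omega
    refine (h n hn).trans ?_
    simp only [Int.cast_neg, Int.cast_natCast, abs_neg, Nat.abs_cast]
    gcongr
  · exact nint_le_abs_sub _ p
  · refine (nint_le_abs_sub _ (-p)).trans_eq ?_
    rw [← abs_neg]
    push_cast
    ring_nf

end IsBadlyApproximable

/- Pigeonhole on the residues modulo `q` of the forms `A p - B r` with `0 ≤ A ≤ a`, `0 ≤ B ≤ b`. -/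
lemma exists_int_linear_relation {p r q : ℤ} (hq : 0 < q) {a b : ℕ} (hab : q < (a + 1) * (b + 1)) :
    ∃ A B C : ℤ, (A ≠ 0 ∨ B ≠ 0) ∧ |A| ≤ a ∧ |B| ≤ b ∧ A * p - B * r + C * q = 0 := by
  have hcard : (Finset.Ico 0 q).card < (Finset.range (a + 1) ×ˢ Finset.range (b + 1)).card := by
    zify
    rw [Finset.card_product, Finset.card_range, Finset.card_range, Int.card_Ico, sub_zero,
      Int.toNat_of_nonneg hq.le]
    exact_mod_cast hab
  obtain ⟨x, hx, y, hy, hxy, hmod⟩ := Finset.exists_ne_map_eq_of_card_lt_of_maps_to hcard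
    (f := fun x : ℕ × ℕ => ((x.1 : ℤ) * p - x.2 * r) % q) fun x _ =>
      Finset.mem_coe.2 (Finset.mem_Ico.2 ⟨Int.emod_nonneg _ hq.ne', Int.emod_lt_of_pos _ hq⟩)
  obtain ⟨C, hC⟩ := Int.ModEq.dvd hmod
  simp only [Finset.mem_product, Finset.mem_range] at hx hy
  refine ⟨x.1 - y.1, x.2 - y.2, C, ?_, ?_, ?_, by linarith⟩
  · by_contra! h
    exact hxy (Prod.ext (by omega) (by omega))
  all_goals rw [abs_le]; omega

namespace RatPoint

variable {α β ε x y R : ℝ} (P : RatPoint)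

lemma exists_linear_relation (hαβ : α + β = 1) : ∃ A B C : ℤ, (A ≠ 0 ∨ B ≠ 0) ∧
    |(A : ℝ)| ≤ (P.q : ℝ) ^ α ∧ |(B : ℝ)| ≤ (P.q : ℝ) ^ β ∧ A * P.p - B * P.r + C * P.q = 0 := by
  have hq := P.cast_q_pos
  have hab : P.q < ((⌊(P.q : ℝ) ^ α⌋₊ : ℤ) + 1) * (⌊(P.q : ℝ) ^ β⌋₊ + 1) := by
    rw [← Int.cast_lt (R := ℝ)]
    push_cast
    calc (P.q : ℝ) = (P.q : ℝ) ^ α * (P.q : ℝ) ^ β := (P.q_rpow_mul_q_rpow hαβ).symm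
      _ < (⌊(P.q : ℝ) ^ α⌋₊ + 1) * (⌊(P.q : ℝ) ^ β⌋₊ + 1) := by
        gcongr <;> exact Nat.lt_floor_add_one _
  obtain ⟨A, B, C, hAB, hA, hB, hABC⟩ :=
    exists_int_linear_relation (p := P.p) (r := P.r) P.q_pos hab
  refine ⟨A, B, C, hAB, ?_, ?_, hABC⟩
  · exact le_trans (mod_cast hA) (Nat.floor_le (by positivity))
  · exact le_trans (mod_cast hB) (Nat.floor_le (by positivity))

/- A vertical line `A x + C = 0` through `P` would make `-C / A` too good an approximation of `x`,
because `|A| ^ (1 / α) ≤ q`. -/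
lemma ne_zero_of_isBadlyApproximable (hα : 0 < α) (hx : IsBadlyApproximable (1 / α) ε x)
    (hP : (P.q : ℝ) ^ α * |P.q * x - P.p| < ε) {A B C : ℤ} (hAB : A ≠ 0 ∨ B ≠ 0)
    (hA : |(A : ℝ)| ≤ (P.q : ℝ) ^ α) (hABC : A * P.p - B * P.r + C * P.q = 0) : B ≠ 0 := by
  rintro rfl
  have hq := P.cast_q_pos
  have hA₀ : A ≠ 0 := hAB.resolve_right (by simp)
  have hrel : (A : ℝ) * P.p + C * P.q = 0 := by exact_mod_cast by simpa using hABC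
  refine hP.not_ge ?_
  calc ε ≤ |(A : ℝ)| ^ (1 / α) * |A * x - (-C : ℤ)| := hx.le_rpow_mul_abs_sub hA₀ _
    _ ≤ P.q * |A * x - (-C : ℤ)| := by
        gcongr
        rwa [one_div, Real.rpow_inv_le_iff_of_pos (abs_nonneg _) hq.le hα]
    _ = |(A : ℝ)| * |P.q * x - P.p| := by
        rw [← abs_of_pos hq, ← abs_mul, ← abs_mul, abs_of_pos hq]
        congr 1
        push_cast
        linear_combination hrel
    _ ≤ (P.q : ℝ) ^ α * |P.q * x - P.p| := by gcongr

lemma exists_ratLine (hα : 0 ≤ α) (hαβ : α + β = 1)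
    (hx : 0 < α → IsBadlyApproximable (1 / α) ε x) (hP : (P.q : ℝ) ^ α * |P.q * x - P.p| < ε) :
    ∃ L : RatLine, L.homogForm P = 0 ∧ |(L.A : ℝ)| ≤ (P.q : ℝ) ^ α ∧
      (L.B : ℝ) ≤ (P.q : ℝ) ^ β := by
  rcases hα.eq_or_lt with rfl | hα
  · obtain rfl : β = 1 := by linarith
    refine ⟨⟨0, P.q, P.r, P.q_pos⟩, ?_, by simp, by simp⟩
    rw [RatLine.homogForm]
    ring
  · obtain ⟨A, B, C, hAB, hA, hB, hABC⟩ := P.exists_linear_relation hαβ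
    rcases lt_or_gt_of_ne (P.ne_zero_of_isBadlyApproximable hα (hx hα) hP hAB hA hABC) with h | h
    · refine ⟨⟨-A, -B, -C, by omega⟩, ?_, by simpa using hA, ?_⟩
      · rw [RatLine.homogForm]
        linear_combination -hABC
      · simpa using (neg_le_abs _).trans hB
    · exact ⟨⟨A, B, C, h⟩, hABC, hA, (le_abs_self _).trans hB⟩

lemma IsClose.exists_dangerousPair {P : RatPoint} (hP : P.IsClose (1 / R ^ 7) x α β y)
    (hα : 0 ≤ α) (hαβ : α + β = 1) (hR : 1 < R)
    (hx : 0 < α → IsBadlyApproximable (1 / α) (1 / R ^ 7) x) :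
    ∃ n t L, DangerousPair R x α β n t y P L ∧ t ≤ n ∧ R ^ n ≤ R ^ 4 * (P.q * (P.q : ℝ) ^ β) := by
  have hq := P.one_le_q
  have hR₄ : 1 ≤ R ^ 4 := one_le_pow₀ hR.le
  obtain ⟨L, hL, hA, hB⟩ := P.exists_ratLine hα hαβ hx hP.left
  have hB₁ := L.one_le_B
  obtain ⟨n, hn, hn'⟩ := exists_nat_pow_near (x := R ^ 4 * (P.q * L.B)) (y := R)
    (one_le_mul_of_one_le_of_one_le hR₄ (one_le_mul_of_one_le_of_one_le hq hB₁)) hR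
  obtain ⟨t, ht, ht'⟩ := exists_nat_pow_near (x := (P.q : ℝ) ^ β / L.B) (y := R)
    ((one_le_div L.cast_B_pos).2 hB) hR
  rw [le_div_iff₀' L.cast_B_pos] at ht
  rw [div_lt_iff₀' L.cast_B_pos] at ht'
  refine ⟨n, t, L, ⟨hP, hL, hA, hn, hn', ht, ht'⟩, ?_, ?_⟩
  · have hlt : R ^ t < R ^ (n + 1) :=
      calc R ^ t ≤ L.B * R ^ t := le_mul_of_one_le_left (by positivity) hB₁
        _ ≤ (P.q : ℝ) ^ β := ht
        _ ≤ (P.q : ℝ) ^ (1 : ℝ) := Real.rpow_le_rpow_of_exponent_le hq (by linarith)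
        _ = P.q := Real.rpow_one _
        _ ≤ P.q * L.B := le_mul_of_one_le_right (by positivity) hB₁
        _ ≤ R ^ 4 * (P.q * L.B) := le_mul_of_one_le_left (by positivity) hR₄
        _ < R ^ (n + 1) := hn'
    exact Nat.lt_succ_iff.1 ((pow_lt_pow_iff_right₀ hR).1 hlt)
  · refine hn.trans ?_
    gcongr

end RatPoint

end BadlyApproximable

section DangerousSets

/-- The ordinates `y` for which some rational point comes dangerously close to `(x, y)` with sizes
`n` and `t`. -/
def dangerousSet (R x α β : ℝ) (n t : ℕ) : Set ℝ := {y | ∃ P L, DangerousPair R x α β n t y P L}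

section

variable {R x α β : ℝ} {n t k : ℕ} {S : Set ℝ}

lemma coverableBy_two_dangerousSet_inter (hα : 0 ≤ α) (hβ : 0 ≤ β) (hαβ : α + β = 1) (hR : 2 ≤ R)
    (hS : ∀ y ∈ S, ∀ z ∈ S, |y - z| ≤ 1 / R ^ n) :
    CoverableBy 2 (1 / R ^ (n + 1)) (dangerousSet R x α β n t ∩ S) := by
  rcases (dangerousSet R x α β n t ∩ S).eq_empty_or_nonempty with h | ⟨y, ⟨P, L, hy⟩, hyS⟩
  · exact h ▸ .empty 2 _
  · refine ((CoverableBy.of_subset_closedBall (x := L.ordinate x) subset_rfl).union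
      (CoverableBy.of_subset_closedBall (x := (P.r / P.q : ℝ)) subset_rfl)).mono le_rfl ?_
    rintro z ⟨⟨P', L', hz⟩, hzS⟩
    exact hy.abs_sub_ordinate_le_or_abs_sub_r_div_q_le hz hα hβ hαβ hR (hS y hyS z hzS)

lemma coverableBy_one_dangerousSet_inter (hα : 0 ≤ α) (hβ : 0 ≤ β) (hαβ : α + β = 1) (hR : 2 ≤ R)
    (hx : 0 < α → IsBadlyApproximable (1 / α) (1 / R ^ 7) x) (hktβ : R ^ (k + 11) ≤ (R ^ t) ^ β)
    (hS : ∀ y ∈ S, ∀ z ∈ S, |y - z| ≤ R ^ k / R ^ n)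
    (hdisj : ∀ i u, i + k < n → u ≤ i → Disjoint S (dangerousSet R x α β i u)) :
    CoverableBy 1 (1 / R ^ (n + 1)) (dangerousSet R x α β n t ∩ S) := by
  have hR₁ : 1 < R := by linarith
  rcases (dangerousSet R x α β n t ∩ S).eq_empty_or_nonempty with h | ⟨y, ⟨P, L, hy⟩, hyS⟩
  · exact h ▸ .empty 1 _
  · refine .of_subset_closedBall (x := L.ordinate x) ?_
    rintro z ⟨⟨P', L', hz⟩, hzS⟩
    rcases hy.ordinate_eq_or_exists_isClose hz hα hβ hαβ hR hktβ (hS y hyS z hzS) with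
      h | ⟨Q, hQ, hQn⟩
    · exact h ▸ hz.abs_sub_ordinate_le hR
    · obtain ⟨i, u, L₀, h₀, hui, hi⟩ := hQ.exists_dangerousPair hα hαβ hR₁ hx
      have hik : R ^ (i + k) < R ^ n :=
        calc R ^ (i + k) = R ^ k * R ^ i := by rw [pow_add, mul_comm]
          _ ≤ R ^ k * (R ^ 4 * (Q.q * (Q.q : ℝ) ^ β)) := by gcongr
          _ < R ^ n := hQn
      exact (Set.disjoint_left.1 (hdisj i u ((pow_lt_pow_iff_right₀ hR₁).1 hik) hui) hyS
        ⟨Q, L₀, h₀⟩).elim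

end

variable {ι : Type*}

/-- The union over all pairs of exponents of the dangerous sets with sizes `n` and
`M * (n - m) ≤ t < M * (n - m + 1)`. This is the part of stage `n` to be controlled at level `m`;
exponents `β j = 0` impose no condition on the ordinate and are left out. -/
def dangerousLayer (R x : ℝ) (α β : ι → ℝ) (M m n : ℕ) : Set ℝ :=
  ⋃ i : ι × Fin M, {y | 0 < β i.1 ∧ y ∈ dangerousSet R x (α i.1) (β i.1) n (M * (n - m) + i.2)}

lemma dangerousSet_subset_stageUnion {R x : ℝ} {α β : ι → ℝ} {M : ℕ} (hM : 0 < M) {j : ι}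
    (hj : 0 < β j) {n t : ℕ} (htn : t ≤ n) :
    dangerousSet R x (α j) (β j) n t ⊆ stageUnion (dangerousLayer R x α β M) n := by
  intro y hy
  refine Set.mem_biUnion (x := n - t / M) (Finset.mem_range.2 (Nat.lt_succ_of_le (Nat.sub_le _ _)))
    (Set.mem_iUnion.2 ⟨(j, ⟨t % M, Nat.mod_lt _ hM⟩), hj, ?_⟩)
  rwa [Nat.sub_sub_self ((Nat.div_le_self _ _).trans htn), Nat.div_add_mod]

lemma pow_add_eleven_le_rpow {R β : ℝ} (hR : 1 ≤ R) {M k : ℕ} (hk : 1 ≤ k) (hM : 12 ≤ M * β)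
    (hβ : 0 ≤ β) (l : ℕ) : R ^ (k + 11) ≤ (R ^ (M * k + l)) ^ β := by
  have hk₁ : (1 : ℝ) ≤ k := mod_cast hk
  rw [← Real.rpow_natCast, ← Real.rpow_natCast, ← Real.rpow_mul (by positivity)]
  gcongr
  push_cast
  calc (k : ℝ) + 11 ≤ k * 12 := by linarith
    _ ≤ k * (M * β) := by gcongr
    _ ≤ (M * k + l) * β := by nlinarith [mul_nonneg (Nat.cast_nonneg (α := ℝ) l) hβ]

variable [Fintype ι] {α β : ι → ℝ} {x : ℝ} {R M : ℕ}

lemma isLocallyCoverable_dangerousLayer (hα : ∀ j, 0 ≤ α j) (hαβ : ∀ j, α j + β j = 1)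
    (hR : 2 ≤ R) (hx : ∀ j, 0 < α j → IsBadlyApproximable (1 / α j) (1 / (R : ℝ) ^ 7) x)
    (hM₀ : 0 < M) (hM : ∀ j, 0 < β j → 12 ≤ M * β j) :
    IsLocallyCoverable R (dangerousLayer R x α β M) fun _ _ => Fintype.card (ι × Fin M) * 2 := by
  intro m n a hmn hdisj
  have hR₂ : (2 : ℝ) ≤ R := mod_cast hR
  rw [dangerousLayer, Set.iUnion_inter]
  refine CoverableBy.iUnion fun i => ?_
  by_cases hi : 0 < β i.1
  swap
  · simpa [hi] using CoverableBy.empty 2 _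
  simp only [hi, true_and]
  rcases hmn.eq_or_lt with rfl | hlt
  · exact coverableBy_two_dangerousSet_inter (hα _) hi.le (hαβ _) hR₂ fun y hy z hz =>
      abs_sub_le_of_mem_adicCell hy hz
  · refine (coverableBy_one_dangerousSet_inter (k := n - m) (hα _) hi.le (hαβ _) hR₂ (hx _)
      (pow_add_eleven_le_rpow (by linarith) (by omega) (hM _ hi) hi.le _) (fun y hy z hz => ?_)
      fun j u hj hu => ?_).mono (by norm_num) subset_rfl
    · refine (abs_sub_le_of_mem_adicCell hy hz).trans_eq ?_
      rw [div_eq_div_iff (by positivity) (by positivity), one_mul, ← pow_add,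
        Nat.sub_add_cancel hmn]
    · exact (hdisj j (by omega)).mono_right (dangerousSet_subset_stageUnion hM₀ hi hu)

lemma geom_sum_le_two_mul_pow {ρ : ℝ} (hρ : 2 ≤ ρ) (n : ℕ) :
    ∑ m ∈ Finset.range (n + 1), ρ ^ m ≤ 2 * ρ ^ n := by
  have hsum := geom_sum_mul ρ (n + 1)
  have hnonneg : 0 ≤ ∑ m ∈ Finset.range (n + 1), ρ ^ m := by positivity
  rw [pow_succ] at hsum
  nlinarith [pow_nonneg (zero_le_two.trans hρ) n]

lemma hausdorffMeasure_diff_dangerous_ne_zero (hα : ∀ j, 0 ≤ α j) (hαβ : ∀ j, α j + β j = 1)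
    (hR : 2 ≤ R) (hx : ∀ j, 0 < α j → IsBadlyApproximable (1 / α j) (1 / (R : ℝ) ^ 7) x)
    (hM₀ : 0 < M) (hM : ∀ j, 0 < β j → 12 ≤ M * β j) {s : ℝ} (hs : 0 < s) (hRs : 2 ≤ (R : ℝ) ^ s)
    (hgap : (R : ℝ) ^ s + (16 * Fintype.card (ι × Fin M) + 4) ≤ R) :
    MeasureTheory.Measure.hausdorffMeasure s
      (Set.Icc (0 : ℝ) 1 \ ⋃ n, stageUnion (dangerousLayer R x α β M) n) ≠ 0 := by
  have : NeZero R := ⟨by omega⟩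
  refine hausdorffMeasure_diff_iUnion_stageUnion_ne_zero
    (isLocallyCoverable_dangerousLayer hα hαβ hR hx hM₀ hM) hs (by omega) fun n => ?_
  set K := Fintype.card (ι × Fin M)
  rw [← Finset.mul_sum]
  push_cast
  calc 4 * ((K : ℝ) * 2) * ∑ m ∈ Finset.range (n + 1), ((R : ℝ) ^ s) ^ m + 4 * ((R : ℝ) ^ s) ^ n
      ≤ 4 * (K * 2) * (2 * ((R : ℝ) ^ s) ^ n) + 4 * ((R : ℝ) ^ s) ^ n := by
        gcongr
        exact geom_sum_le_two_mul_pow hRs n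
    _ = (16 * K + 4) * ((R : ℝ) ^ s) ^ n := by ring
    _ ≤ (R - (R : ℝ) ^ s) * ((R : ℝ) ^ s) ^ n := by
        gcongr
        linarith

end DangerousSets

section BadSlice

/-- The ordinates in `[0, 1]` of the points with abscissa `x` that belong to `BAD(α, β)`. -/
def badSlice (α β x : ℝ) : Set ℝ :=
  {y | y ∈ Set.Icc (0 : ℝ) 1 ∧ ∃ δ : ℝ, 0 < δ ∧
    ∀ p : ℕ, 0 < p → δ ≤ max ((p : ℝ) ^ α * nint (p * x)) ((p : ℝ) ^ β * nint (p * y))}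

lemma mem_badSlice_of_isBadlyApproximable {α c x : ℝ} (hc : 0 < c)
    (hx : IsBadlyApproximable α c x) {y : ℝ} (hy : y ∈ Set.Icc (0 : ℝ) 1) (β : ℝ) :
    y ∈ badSlice α β x :=
  ⟨hy, c, hc, fun p hp => le_max_of_le_left (hx p hp)⟩

lemma mem_badSlice_of_forall_notMem_dangerousSet {R α β x y : ℝ} (hα : 0 ≤ α) (hαβ : α + β = 1)
    (hR : 1 < R) (hx : 0 < α → IsBadlyApproximable (1 / α) (1 / R ^ 7) x)
    (hy : y ∈ Set.Icc (0 : ℝ) 1) (hsafe : ∀ n t, t ≤ n → y ∉ dangerousSet R x α β n t) :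
    y ∈ badSlice α β x := by
  refine ⟨hy, 1 / R ^ 7, by positivity, fun p hp => ?_⟩
  by_contra! h
  obtain ⟨hpx, hpy⟩ := max_lt_iff.1 h
  let P : RatPoint := ⟨round (p * x), round (p * y), p, mod_cast hp⟩
  have hP : P.IsClose (1 / R ^ 7) x α β y :=
    ⟨by simpa [P, nint] using hpx, by simpa [P, nint] using hpy⟩
  obtain ⟨n, t, L, hL, htn, -⟩ := hP.exists_dangerousPair hα hαβ hR hx
  exact hsafe n t htn ⟨P, L, hL⟩

lemma exists_large_base {s : ℝ} (hs₀ : 0 < s) (hs₁ : s < 1) {c : ℝ} (hc : 0 < c) (K : ℝ) :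
    ∃ R : ℕ, 2 ≤ R ∧ 1 / (R : ℝ) ^ 7 ≤ c ∧ 2 ≤ (R : ℝ) ^ s ∧ (R : ℝ) ^ s + K ≤ R := by
  have hcast := tendsto_natCast_atTop_atTop (R := ℝ)
  have hpow := ((tendsto_rpow_atTop hs₀).comp hcast).eventually_ge_atTop 2
  have hcopow := ((tendsto_rpow_atTop (sub_pos.2 hs₁)).comp hcast).eventually_ge_atTop 2
  obtain ⟨R, hpow, hcopow, hK, hc', hR⟩ := (hpow.and (hcopow.and
    ((hcast.eventually_ge_atTop (2 * K)).and ((hcast.eventually_ge_atTop (1 / c)).and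
      (eventually_ge_atTop 2))))).exists
  have hR₂ : (2 : ℝ) ≤ R := mod_cast hR
  refine ⟨R, hR, ?_, hpow, ?_⟩
  · rw [one_div_le (by positivity) hc]
    exact hc'.trans (le_self_pow₀ (by linarith) (by norm_num))
  · have hmul : (R : ℝ) ^ s * (R : ℝ) ^ (1 - s) = R := by
      rw [← Real.rpow_add (by positivity), add_sub_cancel, Real.rpow_one]
    simp only [Function.comp_apply] at hpow hcopow
    nlinarith

lemma exists_pos_forall_isBadlyApproximable {ι : Type*} [Finite ι] {α : ι → ℝ} {x : ℝ}
    (h : ∀ j, 0 < α j → ∃ c, 0 < c ∧ IsBadlyApproximable (1 / α j) c x) :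
    ∃ c, 0 < c ∧ ∀ j, 0 < α j → IsBadlyApproximable (1 / α j) c x := by
  have hsmall : ∀ᶠ c in nhdsWithin (0 : ℝ) (Set.Ioi 0),
      ∀ j, 0 < α j → IsBadlyApproximable (1 / α j) c x := by
    refine eventually_all.2 fun j => ?_
    by_cases hj : 0 < α j
    · obtain ⟨c, hc, hcx⟩ := h j hj
      filter_upwards [Ioc_mem_nhdsGT hc] with c' hc' _ using hcx.mono_right hc'.2
    · exact .of_forall fun _ hj' => absurd hj' hj
  exact (eventually_mem_nhdsWithin.and hsmall).exists

lemma exists_nat_forall_le_mul {ι : Type*} [Finite ι] (β : ι → ℝ) (b : ℝ) :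
    ∃ M : ℕ, 0 < M ∧ ∀ j, 0 < β j → b ≤ M * β j := by
  have hlarge : ∀ᶠ M : ℕ in atTop, ∀ j, 0 < β j → b ≤ M * β j := eventually_all.2 fun j => by
    filter_upwards [tendsto_natCast_atTop_atTop.eventually_ge_atTop (b / β j)] with M hM hj
    exact (div_le_iff₀ hj).1 hM
  exact ((eventually_gt_atTop 0).and hlarge).exists

lemma diff_dangerous_subset_badSlice {ι : Type*} {α β : ι → ℝ} {x : ℝ} {R M : ℕ}
    (hα : ∀ j, 0 ≤ α j) (hβ : ∀ j, 0 ≤ β j) (hαβ : ∀ j, α j + β j = 1) (hR : 2 ≤ R)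
    (hx : ∀ j, 0 < α j → IsBadlyApproximable (1 / α j) (1 / (R : ℝ) ^ 7) x) (hM : 0 < M) (j : ι) :
    Set.Icc (0 : ℝ) 1 \ ⋃ n, stageUnion (dangerousLayer R x α β M) n ⊆
      badSlice (α j) (β j) x := by
  rintro y ⟨hy, hsafe⟩
  rcases (hβ j).eq_or_lt with hj | hj
  · have hαj : α j = 1 := by linarith [hαβ j]
    refine mem_badSlice_of_isBadlyApproximable (c := 1 / (R : ℝ) ^ 7) (by positivity) ?_ hy _
    simpa [hαj] using hx j (by simp [hαj])
  · exact mem_badSlice_of_forall_notMem_dangerousSet (hα j) (hαβ j) (mod_cast hR) (hx j) hy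
      fun n t htn hyt => hsafe (Set.mem_iUnion.2 ⟨n, dangerousSet_subset_stageUnion hM hj htn hyt⟩)

end BadSlice

theorem stmt1_general {ι : Type*} [Finite ι] (α β : ι → ℝ) (hα : ∀ j, 0 ≤ α j)
    (hβ : ∀ j, 0 ≤ β j) (hαβ : ∀ j, α j + β j = 1) (θ₁ : ℝ)
    (hθ₁ : ∀ j, 0 < α j → ∃ c, 0 < c ∧ IsBadlyApproximable (1 / α j) c θ₁) :
    dimH (⋂ j, badSlice (α j) (β j) θ₁) = 1 := by
  have := Fintype.ofFinite ι
  refine le_antisymm ((dimH_mono (Set.subset_univ _)).trans_eq Real.dimH_univ) ?_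
  obtain ⟨c, hc, hθ⟩ := exists_pos_forall_isBadlyApproximable hθ₁
  obtain ⟨M, hM₀, hM⟩ := exists_nat_forall_le_mul β 12
  refine le_of_forall_lt fun d hd => ?_
  obtain ⟨s, hds, hs⟩ := ENNReal.lt_iff_exists_nnreal_btwn.1 hd
  have hs₀ : (0 : ℝ) < s := mod_cast ENNReal.coe_pos.1 (bot_le.trans_lt hds)
  obtain ⟨R, hR, hRc, hRs, hgap⟩ := exists_large_base hs₀ (mod_cast hs) hc
    (16 * Fintype.card (ι × Fin M) + 4)
  have hθR := fun j hj => (hθ j hj).mono_right hRc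
  have hμ := hausdorffMeasure_diff_dangerous_ne_zero hα hαβ hR hθR hM₀ hM hs₀ hRs hgap
  exact hds.trans_le ((le_dimH_of_hausdorffMeasure_ne_zero hμ).trans (dimH_mono
    (Set.subset_iInter (diff_dangerous_subset_badSlice hα hβ hαβ hR hθR hM₀))))

/-- Badziahin–Pollington–Velani theorem (Schmidt's conjecture). -/
theorem stmt1 (r : ℕ) (hr : 1 ≤ r) (α β : Fin r → ℝ)
    (hα : ∀ j, 0 ≤ α j ∧ α j ≤ 1) (hβ : ∀ j, 0 ≤ β j ∧ β j ≤ 1)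
    (hαβ : ∀ j, α j + β j = 1) (θ₁ : ℝ)
    (hθ₁ : ∃ c : ℝ, 0 < c ∧ ∀ q : ℕ, 0 < q → c ≤ (q : ℝ) * nint (q * θ₁)) :
    dimH (⋂ j : Fin r, {θ₂ : ℝ | θ₂ ∈ Set.Icc (0 : ℝ) 1 ∧ ∃ δ : ℝ, 0 < δ ∧
      ∀ p : ℕ, 0 < p →
        δ ≤ max ((p : ℝ) ^ (α j) * nint (p * θ₁)) ((p : ℝ) ^ (β j) * nint (p * θ₂))}) = 1 := by
  obtain ⟨c, hc, hθ⟩ := hθ₁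
  exact stmt1_general α β (hα · |>.1) (hβ · |>.1) hαβ θ₁ fun j hj => ⟨c, hc,
    .mono_left (by simpa [IsBadlyApproximable] using hθ) (one_le_one_div hj (hα j).2)⟩
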